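/- arXiv:1707.06688 — 2 statements merged into one kernel-verified Lean document; each statement's English description precedes it below -/
import Mathlib

section
/- (Converse) Let σ_s, σ_w > 0 with σ_s² < σ_w², and set α = σ_s²/(σ_s²+σ_w²). Let (Λ_n)_{n≥1} be a sequence of full-rank lattices Λ_n ⊂ ℝ^n. For each n let X_n ~ D_{Λ_n, σ_s} and W_n ~ N(0, σ_w² I_n) be independent, and let P_e(Λ_n) = Pr[(α−1)X_n + αW_n ∉ V(Λ_n)] (the error probability of the maximum-a-posteriori decoder). If (1/n)·H(X_n) → (1/2)·log(1 + σ_s²/σ_w²) as n → ∞, then P_e(Λ_n) is bounded away from 0, i.e. liminf_{n→∞} P_e(Λ_n) > 0. -/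
open MeasureTheory Real Filter Pointwise
open scoped ENNReal RealInnerProductSpace

noncomputable section

/-- The (continuous) Gaussian density with parameter `σ` on `ℝⁿ`:
`f_σ(x) = (2πσ²)^{-n/2} exp(-‖x‖²/(2σ²))`. -/
def gaussF (n : ℕ) (σ : ℝ) (x : EuclideanSpace ℝ (Fin n)) : ℝ :=
  (2 * π * σ ^ 2) ^ (-(n : ℝ) / 2) * Real.exp (-‖x‖ ^ 2 / (2 * σ ^ 2))

/-- The Gaussian mass `f_σ(S) = Σ_{y ∈ S} f_σ(y)` of a (countable) set `S ⊆ ℝⁿ`. -/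
def gaussMass (n : ℕ) (σ : ℝ) (S : Set (EuclideanSpace ℝ (Fin n))) : ℝ :=
  ∑' y : S, gaussF n σ y

/-- The Gaussian measure `N(0, σ² Iₙ)` on `ℝⁿ`, given by its density w.r.t. Lebesgue measure. -/
def gaussMeasure (n : ℕ) (σ : ℝ) : Measure (EuclideanSpace ℝ (Fin n)) :=
  volume.withDensity fun x => ENNReal.ofReal (gaussF n σ x)

/-- The coset `S + t` of a set `S ⊆ ℝⁿ`, i.e. `{x | x - t ∈ S}`. -/
def coset (n : ℕ) (S : Set (EuclideanSpace ℝ (Fin n))) (t : EuclideanSpace ℝ (Fin n)) :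
    Set (EuclideanSpace ℝ (Fin n)) := {x | x - t ∈ S}

/-- The Voronoi cell of `S`: `{x | ⟪x,y⟫ ≤ ‖y‖²/2 for all y ∈ S}`. -/
def voronoi (n : ℕ) (S : Set (EuclideanSpace ℝ (Fin n))) : Set (EuclideanSpace ℝ (Fin n)) :=
  {x | ∀ y ∈ S, ⟪x, y⟫ ≤ ‖y‖ ^ 2 / 2}

/-- The inverse error function `err⁻¹_ε(Λ)`: the least `s > 0` such that a standard Gaussian
leaves `s · V(Λ)` with probability at most `ε`. -/
def errInv (n : ℕ) (ε : ℝ) (S : Set (EuclideanSpace ℝ (Fin n))) : ℝ :=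
  sInf {s : ℝ | 0 < s ∧ gaussMeasure n 1 ((s • voronoi n S)ᶜ) ≤ ENNReal.ofReal ε}

/-- The Shannon entropy (in nats) of the discrete Gaussian `D_{S,σ}` supported on `S`,
which assigns mass `f_σ(y)/f_σ(S)` to each `y ∈ S`. -/
def dgEntropy (n : ℕ) (σ : ℝ) (S : Set (EuclideanSpace ℝ (Fin n))) : ℝ :=
  -∑' y : S, (gaussF n σ y / gaussMass n σ S) * Real.log (gaussF n σ y / gaussMass n σ S)

/-- The flatness factor `ε_Λ(σ) = sup_{x ∈ V(Λ)} |V(Λ)·f_σ(Λ+x) − 1|`. -/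
def flatness (n : ℕ) (L : Submodule ℤ (EuclideanSpace ℝ (Fin n))) (σ : ℝ) : ℝ :=
  ⨆ x : voronoi n (L : Set (EuclideanSpace ℝ (Fin n))),
    |ZLattice.covolume L volume *
        gaussMass n σ (coset n (L : Set (EuclideanSpace ℝ (Fin n))) x) - 1|

/-!
Write `s(x) = ‖x‖² / (2σs²)`, so that `X` has mass `exp (-s(x)) / Z` and entropy
`H = log Z + E[s(X)]`. Halving the inverse temperature multiplies the theta series by at most
`2 ^ (n/2)`; this bounds the second moment of `s(X)` by `24 n²`, and a Paley–Zygmund argument shows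
that `s(X) ≥ E[s(X)] - nδ` with probability at least `δ² / 24`, whatever the lattice. By symmetry
and concentration, the noise satisfies `⟪x, w⟫ ≤ 0` and `‖w‖² > nσw²(1 - δ)` with probability at
least `1/4`.

Choose `v / 2` slightly above the limit `h` of `H / n` and set `τ² = σw² + vσs²`. If
`log (1 + vσs²/σw²) / 2 < h`, then on these events the joint density at `(x, w)` is at most
`exp (-nδ)` times the `N(0, τ² Iₙ)` density at `x + w`. The decision regions compete for the total
mass one of `N(0, τ² Iₙ)`, so correct decoding on these events has probability at most `exp (-nδ)`.
-/

section ThetaSeries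

lemma sq_tsum_le_card_mul_tsum_prod {ι κ : Type*} [Fintype κ] [DecidableEq κ]
    (c : ι → κ) (g : ι → ℝ≥0∞) :
    (∑' i, g i) ^ 2 ≤
      Fintype.card κ * ∑' p : ι × ι, if c p.1 = c p.2 then g p.1 * g p.2 else 0 := by
  let f : κ → ι → ℝ≥0∞ := fun d i => if c i = d then g i else 0
  have split : ∑' i, g i = ∑ d, ∑' i, f d i := by
    rw [← Summable.tsum_finsetSum fun _ _ => ENNReal.summable]
    simp [f]
  have square (d : κ) : (∑' i, f d i) ^ 2 = ∑' p : ι × ι, f d p.1 * f d p.2 := by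
    simp_rw [sq, ENNReal.tsum_prod', ENNReal.tsum_mul_left, ENNReal.tsum_mul_right]
  have collect : ∑ d, (∑' i, f d i) ^ 2 =
      ∑' p : ι × ι, if c p.1 = c p.2 then g p.1 * g p.2 else 0 := by
    simp_rw [square]
    rw [← Summable.tsum_finsetSum fun _ _ => ENNReal.summable]
    refine tsum_congr fun p => ?_
    simp [f, eq_comm]
  have power_mean := ENNReal.rpow_sum_le_const_mul_sum_rpow Finset.univ
    (fun d => ∑' i, f d i) one_le_two
  norm_num [-ENNReal.rpow_ofNat] at power_mean
  rw [split, ← collect]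
  exact_mod_cast power_mean

lemma mkQ_eq_mkQ_iff_exists_nsmul {G : Type*} [AddCommGroup G] {k : ℕ} {x y : G} :
    ModN.mkQ k x = ModN.mkQ k y ↔ ∃ z, k • z = x - y := by
  simp [ModN.mkQ, Submodule.Quotient.eq, LinearMap.mem_range]

lemma injective_add_sub (G : Type*) [AddCommGroup G] [IsAddTorsionFree G] :
    Function.Injective fun p : G × G => (p.1 + p.2, p.1 - p.2) := by
  rintro ⟨x, y⟩ ⟨x', y'⟩ h
  obtain ⟨hadd, hsub⟩ : x + y = x' + y' ∧ x - y = x' - y' := by simpa using h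
  have hx : x = x' := nsmul_right_injective two_ne_zero <| by
    calc 2 • x = (x + y) + (x - y) := by abel
      _ = (x' + y') + (x' - y') := by rw [hadd, hsub]
      _ = 2 • x' := by abel
  subst hx
  simpa using hadd

lemma sq_tsum_le_two_pow_finrank_mul {G : Type*} [AddCommGroup G] [Module.Free ℤ G]
    [Module.Finite ℤ G] (g : G → ℝ≥0∞) :
    (∑' x, g x) ^ 2 ≤
      2 ^ Module.finrank ℤ G * ∑' p : G × G, g (p.1 + p.2) * g (p.1 - p.2) := by
  classical
  have : Fintype (ModN G 2) := Fintype.ofFinite _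
  have : IsAddTorsionFree G := .of_isTorsionFree ℤ G
  have card : Fintype.card (ModN G 2) = 2 ^ Module.finrank ℤ G := by
    rw [← Nat.card_eq_fintype_card, ModN.natCard_eq]
  have same_class_iff (x y : G) : ModN.mkQ 2 x = ModN.mkQ 2 y ↔
      (x, y) ∈ Set.range fun p : G × G => (p.1 + p.2, p.1 - p.2) := by
    rw [mkQ_eq_mkQ_iff_exists_nsmul]
    constructor
    · rintro ⟨z, hz⟩
      refine ⟨(y + z, z), Prod.ext ?_ (add_sub_cancel_right y z)⟩
      simp only [add_assoc, ← two_nsmul, hz, add_sub_cancel]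
    · rintro ⟨⟨u, v⟩, h⟩
      obtain ⟨rfl, rfl⟩ := Prod.mk.inj h
      exact ⟨v, by abel⟩
  have reindex := (injective_add_sub G).tsum_eq
    (f := fun p => if ModN.mkQ 2 p.1 = ModN.mkQ 2 p.2 then g p.1 * g p.2 else 0) fun p hp =>
      (same_class_iff p.1 p.2).1 (by by_contra h; simp [h] at hp)
  refine (sq_tsum_le_card_mul_tsum_prod (ModN.mkQ 2) g).trans_eq ?_
  rw [card, ← reindex]
  simp only [(same_class_iff _ _).2 ⟨_, rfl⟩, if_true, Nat.cast_pow, Nat.cast_ofNat]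

variable {E : Type*} [NormedAddCommGroup E]

/-- The theta series of a set `S` of vectors, `∑_{x ∈ S} exp (-a ‖x‖²)`: up to normalization, the
Gaussian mass of `S` as a function of the inverse variance `2a`. -/
def theta (S : Set E) (a : ℝ) : ℝ :=
  ∑' x : S, exp (-(a * ‖(x : E)‖ ^ 2))

lemma summable_exp_neg_mul_sq_norm [NormedSpace ℝ E] [FiniteDimensional ℝ E] (L : Submodule ℤ E)
    [DiscreteTopology L] {a : ℝ} (ha : 0 < a) :
    Summable fun x : L => exp (-(a * ‖(x : E)‖ ^ 2)) := by
  set m := Module.finrank ℤ L + 1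
  have power_summable :=
    (ZLattice.summable_norm_pow_inv L (2 * m) (by lia)).mul_left ((m.factorial : ℝ) / a ^ m)
  refine Summable.of_norm_bounded_eventually power_summable ?_
  filter_upwards [(Set.finite_singleton (0 : L)).compl_mem_cofinite] with x hx
  have hx0 : 0 < ‖(x : E)‖ := norm_pos_iff.2 fun h => hx (Subtype.ext h)
  have hpos : 0 < a * ‖(x : E)‖ ^ 2 := by positivity
  rw [Real.norm_eq_abs, abs_of_pos (exp_pos _), Real.exp_neg]
  calc (exp (a * ‖(x : E)‖ ^ 2))⁻¹ ≤ ((a * ‖(x : E)‖ ^ 2) ^ m / m.factorial)⁻¹ := by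
        gcongr
        exact pow_div_factorial_le_exp _ hpos.le m
    _ = m.factorial / a ^ m * ‖x‖⁻¹ ^ (2 * m) := by
        rw [mul_pow, inv_div, inv_pow, pow_mul, Submodule.coe_norm]
        field_simp

lemma sq_theta_le_two_pow_finrank_mul_sq_theta [InnerProductSpace ℝ E] [FiniteDimensional ℝ E]
    (L : Submodule ℤ E) [DiscreteTopology L] {a : ℝ} (ha : 0 < a) :
    theta (L : Set E) a ^ 2 ≤ 2 ^ Module.finrank ℤ L * theta (L : Set E) (2 * a) ^ 2 := by
  have : IsAddTorsionFree E := .of_isTorsionFree ℝ E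
  let g (b : ℝ) (x : L) : ℝ≥0∞ := .ofReal (exp (-(b * ‖(x : E)‖ ^ 2)))
  have theta_eq {b : ℝ} (hb : 0 < b) : ENNReal.ofReal (theta (L : Set E) b) = ∑' x, g b x :=
    ENNReal.ofReal_tsum_of_nonneg (fun _ => (exp_pos _).le) (summable_exp_neg_mul_sq_norm L hb)
  have theta_nonneg (b : ℝ) : 0 ≤ theta (L : Set E) b := tsum_nonneg fun _ => (exp_pos _).le
  have parallelogram (x y : L) : g a (x + y) * g a (x - y) = g (2 * a) x * g (2 * a) y := by
    simp only [g, ← ENNReal.ofReal_mul (exp_pos _).le, ← Real.exp_add, Submodule.coe_add,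
      Submodule.coe_sub]
    congr 2
    linear_combination -a * parallelogram_law_with_norm ℝ (x : E) y
  have square : ∑' p : L × L, g (2 * a) p.1 * g (2 * a) p.2 = (∑' x, g (2 * a) x) ^ 2 := by
    simp_rw [sq, ENNReal.tsum_prod', ENNReal.tsum_mul_left, ENNReal.tsum_mul_right]
  have key := sq_tsum_le_two_pow_finrank_mul (g a)
  simp_rw [parallelogram, square] at key
  rw [← theta_eq ha, ← theta_eq (mul_pos two_pos ha), ← ENNReal.ofReal_pow (theta_nonneg _),
    ← ENNReal.ofReal_pow (theta_nonneg _), ← ENNReal.ofReal_ofNat, ← ENNReal.ofReal_pow two_pos.le,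
    ← ENNReal.ofReal_mul (by positivity), ENNReal.ofReal_le_ofReal_iff (by positivity)] at key
  exact key

lemma finrank_int_le_finrank_real [NormedSpace ℝ E] [FiniteDimensional ℝ E]
    (L : Submodule ℤ E) [hL : DiscreteTopology L] :
    Module.finrank ℤ L ≤ Module.finrank ℝ E := by
  have := Real.finrank_eq_int_finrank_of_discrete (s := (L : Set E)) (by rwa [Submodule.span_eq])
  rw [Set.finrank, Set.finrank, Submodule.span_eq] at this
  exact this ▸ Submodule.finrank_le _

end ThetaSeries

section GibbsDistribution

variable {ι : Type*}

lemma sq_le_tsum_mul_tsum_indicator {p f : ι → ℝ} (hp : ∀ i, 0 ≤ p i) (hp_sum : HasSum p 1)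
    (hpf : Summable fun i => p i * f i) (hpf2 : Summable fun i => p i * f i ^ 2) {t : ℝ}
    (ht : 0 ≤ t) (ht_le : t ≤ ∑' i, p i * f i) :
    t ^ 2 ≤ (∑' i, p i * f i ^ 2) *
      ∑' i, {i | (∑' j, p j * f j) - t ≤ f i}.indicator p i := by
  set m := ∑' i, p i * f i
  set M := ∑' i, p i * f i ^ 2
  set A := {i | m - t ≤ f i}
  set Q := ∑' i, A.indicator p i
  have M_nonneg : 0 ≤ M := tsum_nonneg fun i => mul_nonneg (hp i) (sq_nonneg _)
  have Q_nonneg : 0 ≤ Q := tsum_nonneg fun i => Set.indicator_nonneg (fun i _ => hp i) i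
  have pointwise {c : ℝ} (hc : 0 ≤ c) (i : ι) :
      2 * c * (p i * f i) ≤
        2 * c * (m - t) * p i + c ^ 2 * (p i * f i ^ 2) + A.indicator p i := by
    have hsq : 0 ≤ p i * (c * f i - 1) ^ 2 := mul_nonneg (hp i) (sq_nonneg _)
    have hcp : 0 ≤ c * p i := mul_nonneg hc (hp i)
    by_cases hi : i ∈ A
    · rw [Set.indicator_of_mem hi]
      nlinarith [mul_nonneg hcp (sub_nonneg.2 ht_le)]
    · rw [Set.indicator_of_notMem hi]
      have hfi : f i ≤ m - t := (not_le.1 hi).le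
      nlinarith [mul_le_mul_of_nonneg_left hfi hcp, mul_nonneg (hp i) (sq_nonneg (c * f i))]
  have quadratic (c : ℝ) : 0 ≤ M * (c * c) + -(2 * t) * c + Q := by
    rcases le_total 0 c with hc | hc
    · have := hasSum_le (pointwise hc) (hpf.hasSum.mul_left _)
        (((hp_sum.mul_left _).add (hpf2.hasSum.mul_left _)).add
          (hp_sum.summable.indicator A).hasSum)
      linarith
    · nlinarith [mul_nonneg M_nonneg (mul_self_nonneg c), mul_nonneg ht (neg_nonneg.2 hc)]
  have := discrim_le_zero quadratic
  rw [discrim] at this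
  linarith

/-- The Gibbs distribution with energy function `s` at temperature one. -/
def gibbsWeight (s : ι → ℝ) (i : ι) : ℝ :=
  exp (-s i) / ∑' j, exp (-s j)

/-- The mean energy of the Gibbs distribution. -/
def gibbsMean (s : ι → ℝ) : ℝ :=
  ∑' i, gibbsWeight s i * s i

variable {s : ι → ℝ}

lemma gibbsWeight_nonneg (s : ι → ℝ) (i : ι) : 0 ≤ gibbsWeight s i :=
  div_nonneg (exp_pos _).le (tsum_nonneg fun _ => (exp_pos _).le)

lemma tsum_exp_neg_pos [Nonempty ι] (hs : Summable fun i => exp (-s i)) :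
    0 < ∑' i, exp (-s i) :=
  hs.tsum_pos (fun _ => (exp_pos _).le) (Classical.arbitrary ι) (exp_pos _)

lemma hasSum_gibbsWeight [Nonempty ι] (hs : Summable fun i => exp (-s i)) :
    HasSum (gibbsWeight s) 1 := by
  rw [← div_self (tsum_exp_neg_pos hs).ne']
  exact hs.hasSum.div_const _

lemma neg_tsum_gibbsWeight_mul_log [Nonempty ι] (hs : Summable fun i => exp (-s i))
    (hmean : Summable fun i => gibbsWeight s i * s i) :
    -∑' i, gibbsWeight s i * log (gibbsWeight s i) = log (∑' i, exp (-s i)) + gibbsMean s := by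
  have log_weight (i : ι) : log (gibbsWeight s i) = -s i - log (∑' j, exp (-s j)) := by
    rw [gibbsWeight, log_div (exp_pos _).ne' (tsum_exp_neg_pos hs).ne', log_exp]
  have := hmean.hasSum.neg.sub ((hasSum_gibbsWeight hs).mul_right (log (∑' j, exp (-s j))))
  simp_rw [log_weight, mul_sub, mul_neg]
  rw [this.tsum_eq, gibbsMean]
  ring

lemma sq_le_add_exp_half_sub {x N : ℝ} (hx : 0 ≤ x) (hN : 0 ≤ N) :
    x ^ 2 ≤ 8 * N ^ 2 + 16 * exp (x / 2 - N) := by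
  rcases le_total (x / 2) N with h | h
  · nlinarith [exp_pos (x / 2 - N)]
  · have := pow_div_factorial_le_exp (x / 2 - N) (by linarith) 2
    norm_num [Nat.factorial] at this
    nlinarith [sq_nonneg (x / 2 - 2 * N)]

-- Halving the inverse temperature costs a factor `exp N`, so `exp (s / 2 - N)` has mean at most 1.
lemma gibbsWeight_second_moment [Nonempty ι] {N : ℝ} (hN : 1 ≤ N) (hs0 : ∀ i, 0 ≤ s i)
    (hs : Summable fun i => exp (-s i)) (hs2 : Summable fun i => exp (-(s i / 2)))
    (hdouble : ∑' i, exp (-(s i / 2)) ≤ exp N * ∑' i, exp (-s i)) :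
    Summable (fun i => gibbsWeight s i * s i ^ 2) ∧
      ∑' i, gibbsWeight s i * s i ^ 2 ≤ 24 * N ^ 2 := by
  have hZ := tsum_exp_neg_pos hs
  set Z := ∑' i, exp (-s i) with hZ_def
  have pointwise (i : ι) : gibbsWeight s i * s i ^ 2 ≤
      8 * N ^ 2 * gibbsWeight s i + 16 * exp (-N) / Z * exp (-(s i / 2)) := by
    have tilt : 16 * exp (-N) / Z * exp (-(s i / 2)) =
        gibbsWeight s i * (16 * exp (s i / 2 - N)) := by
      rw [gibbsWeight, ← hZ_def, show s i / 2 - N = s i + -(s i / 2) + -N by ring, exp_add,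
        exp_add, exp_neg (s i)]
      field_simp
    rw [tilt]
    have := mul_le_mul_of_nonneg_left (sq_le_add_exp_half_sub (hs0 i) (zero_le_one.trans hN))
      (gibbsWeight_nonneg s i)
    linarith
  have majorant := ((hasSum_gibbsWeight hs).mul_left (8 * N ^ 2)).add
    (hs2.hasSum.mul_left (16 * exp (-N) / Z))
  have summable : Summable fun i => gibbsWeight s i * s i ^ 2 :=
    .of_nonneg_of_le (fun i => mul_nonneg (gibbsWeight_nonneg s i) (sq_nonneg _)) pointwise
      majorant.summable
  refine ⟨summable, (hasSum_le pointwise summable.hasSum majorant).trans ?_⟩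
  have : 16 * exp (-N) / Z * ∑' i, exp (-(s i / 2)) ≤ 16 := by
    calc _ ≤ 16 * exp (-N) / Z * (exp N * Z) := by gcongr
      _ = 16 := by rw [exp_neg]; field_simp
  nlinarith

lemma summable_gibbsWeight_mul [Nonempty ι] (hs : Summable fun i => exp (-s i))
    (hs0 : ∀ i, 0 ≤ s i) (hsq : Summable fun i => gibbsWeight s i * s i ^ 2) :
    Summable fun i => gibbsWeight s i * s i := by
  refine .of_nonneg_of_le (fun i => mul_nonneg (gibbsWeight_nonneg s i) (hs0 i)) (fun i => ?_)
    ((hasSum_gibbsWeight hs).summable.add hsq)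
  nlinarith [mul_nonneg (gibbsWeight_nonneg s i) (sq_nonneg (s i - 1)),
    mul_nonneg (gibbsWeight_nonneg s i) (hs0 i)]

lemma le_tsum_indicator_gibbsWeight [Nonempty ι] {N δ : ℝ} (hN : 0 < N) (hs0 : ∀ i, 0 ≤ s i)
    (hs : Summable fun i => exp (-s i)) (hsq : Summable fun i => gibbsWeight s i * s i ^ 2)
    (hmoment : ∑' i, gibbsWeight s i * s i ^ 2 ≤ 24 * N ^ 2) (hδ0 : 0 ≤ δ) (hδ1 : δ ≤ 1) :
    δ ^ 2 / 24 ≤ ∑' i, {i | gibbsMean s - N * δ ≤ s i}.indicator (gibbsWeight s) i := by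
  rcases le_total (N * δ) (gibbsMean s) with h | h
  · set Q := ∑' i, {i | gibbsMean s - N * δ ≤ s i}.indicator (gibbsWeight s) i
    have paley_zygmund : (N * δ) ^ 2 ≤ (∑' i, gibbsWeight s i * s i ^ 2) * Q :=
      sq_le_tsum_mul_tsum_indicator (gibbsWeight_nonneg s) (hasSum_gibbsWeight hs)
        (summable_gibbsWeight_mul hs hs0 hsq) hsq (mul_nonneg hN.le hδ0) h
    have hQ : 0 ≤ Q := tsum_nonneg fun i => Set.indicator_nonneg
      (fun i _ => gibbsWeight_nonneg s i) i
    have : N ^ 2 * δ ^ 2 ≤ N ^ 2 * (24 * Q) := by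
      calc N ^ 2 * δ ^ 2 = (N * δ) ^ 2 := by ring
        _ ≤ 24 * N ^ 2 * Q := paley_zygmund.trans (by gcongr)
        _ = N ^ 2 * (24 * Q) := by ring
    linarith [le_of_mul_le_mul_left this (by positivity)]
  · have all : {i | gibbsMean s - N * δ ≤ s i} = Set.univ :=
      Set.eq_univ_of_forall fun i => (sub_nonpos.2 h).trans (hs0 i)
    rw [all, Set.indicator_univ, (hasSum_gibbsWeight hs).tsum_eq]
    nlinarith

end GibbsDistribution

section GaussianMeasure

variable {n : ℕ} {σ : ℝ}

lemma gaussF_pos (hσ : 0 < σ) (x : EuclideanSpace ℝ (Fin n)) : 0 < gaussF n σ x := by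
  unfold gaussF
  positivity

lemma gaussF_eq_exp (hσ : 0 < σ) (x : EuclideanSpace ℝ (Fin n)) :
    gaussF n σ x = exp (-(n / 2 * log (2 * π * σ ^ 2)) - ‖x‖ ^ 2 / (2 * σ ^ 2)) := by
  rw [gaussF, rpow_def_of_pos (by positivity), ← Real.exp_add]
  congr 1
  ring

lemma measurable_gaussF : Measurable (gaussF n σ) := by
  unfold gaussF
  fun_prop

lemma integral_gaussF_mul_exp_mul_sq_norm (hσ : 0 < σ) {t : ℝ} (ht : 0 < 1 - 2 * t * σ ^ 2) :
    ∫ w, gaussF n σ w * exp (t * ‖w‖ ^ 2) = exp (-(n / 2 * log (1 - 2 * t * σ ^ 2))) := by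
  have combine (w : EuclideanSpace ℝ (Fin n)) : gaussF n σ w * exp (t * ‖w‖ ^ 2) =
      exp (-(n / 2 * log (2 * π * σ ^ 2))) *
        exp (-((1 - 2 * t * σ ^ 2) / (2 * σ ^ 2)) * ‖w‖ ^ 2) := by
    rw [gaussF_eq_exp hσ, ← Real.exp_add, ← Real.exp_add]
    congr 1
    field_simp
    ring
  have scale : π / ((1 - 2 * t * σ ^ 2) / (2 * σ ^ 2)) =
      2 * π * σ ^ 2 / (1 - 2 * t * σ ^ 2) := by
    field_simp
  simp_rw [combine]
  rw [integral_const_mul, GaussianFourier.integral_rexp_neg_mul_sq_norm (by positivity),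
    finrank_euclideanSpace_fin, scale, rpow_def_of_pos (by positivity),
    log_div (by positivity) ht.ne', ← Real.exp_add]
  congr 1
  ring

lemma integral_gaussF (hσ : 0 < σ) : ∫ w, gaussF n σ w = 1 := by
  simpa using integral_gaussF_mul_exp_mul_sq_norm (n := n) (t := 0) hσ (by simp)

lemma integrable_gaussF (hσ : 0 < σ) : Integrable (gaussF n σ) :=
  .of_integral_ne_zero (by simp [integral_gaussF hσ])

lemma isProbabilityMeasure_gaussMeasure (n : ℕ) (hσ : 0 < σ) :
    IsProbabilityMeasure (gaussMeasure n σ) := by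
  constructor
  rw [gaussMeasure, withDensity_apply _ .univ, Measure.restrict_univ,
    ← ofReal_integral_eq_lintegral_ofReal (integrable_gaussF hσ)
      (.of_forall fun w => (gaussF_pos hσ w).le), integral_gaussF hσ, ENNReal.ofReal_one]

lemma integral_gaussMeasure (hσ : 0 < σ) (g : EuclideanSpace ℝ (Fin n) → ℝ) :
    ∫ w, g w ∂gaussMeasure n σ = ∫ w, gaussF n σ w * g w := by
  rw [gaussMeasure, integral_withDensity_eq_integral_toReal_smul
    measurable_gaussF.ennreal_ofReal (.of_forall fun _ => ENNReal.ofReal_lt_top)]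
  simp [ENNReal.toReal_ofReal (gaussF_pos hσ _).le]

lemma real_gaussMeasure (hσ : 0 < σ) {T : Set (EuclideanSpace ℝ (Fin n))}
    (hT : MeasurableSet T) : (gaussMeasure n σ).real T = ∫ w in T, gaussF n σ w := by
  rw [Measure.real, gaussMeasure, withDensity_apply _ hT,
    ← ofReal_integral_eq_lintegral_ofReal (integrable_gaussF hσ).integrableOn
      (.of_forall fun w => (gaussF_pos hσ w).le),
    ENNReal.toReal_ofReal (integral_nonneg fun w => (gaussF_pos hσ w).le)]

instance isNegInvariant_gaussMeasure : (gaussMeasure n σ).IsNegInvariant := by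
  constructor
  ext T hT
  rw [Measure.neg_apply, gaussMeasure, withDensity_apply _ hT, withDensity_apply _ hT.neg,
    ← lintegral_indicator hT, ← lintegral_indicator hT.neg, ← lintegral_neg_eq_self]
  refine lintegral_congr fun w => ?_
  have : -w ∈ -T ↔ w ∈ T := Set.neg_mem_neg
  by_cases hw : w ∈ T <;> simp [this, hw, gaussF]

lemma mgf_sq_norm_gaussMeasure (hσ : 0 < σ) {t : ℝ} (ht : 0 < 1 - 2 * t * σ ^ 2) :
    ProbabilityTheory.mgf (fun w => ‖w‖ ^ 2) (gaussMeasure n σ) t =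
      exp (-(n / 2 * log (1 - 2 * t * σ ^ 2))) := by
  rw [ProbabilityTheory.mgf, integral_gaussMeasure hσ, integral_gaussF_mul_exp_mul_sq_norm hσ ht]

lemma gaussMeasure_sq_norm_le_le (hσ : 0 < σ) {δ : ℝ} (hδ : 0 ≤ δ) :
    (gaussMeasure n σ).real {w | ‖w‖ ^ 2 ≤ n * σ ^ 2 * (1 - δ)} ≤
      exp (-((log (1 + δ) - δ * (1 - δ)) / 2)) ^ n := by
  have := isProbabilityMeasure_gaussMeasure n hσ
  have shift : 1 - 2 * (-(δ / (2 * σ ^ 2))) * σ ^ 2 = 1 + δ := by field_simp; ring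
  have mgf_eq := mgf_sq_norm_gaussMeasure (n := n) (t := -(δ / (2 * σ ^ 2))) hσ
    (by rw [shift]; positivity)
  have chernoff := ProbabilityTheory.measure_le_le_exp_mul_mgf (X := fun w => ‖w‖ ^ 2)
    (μ := gaussMeasure n σ) (n * σ ^ 2 * (1 - δ)) (neg_nonpos.2 (by positivity))
    (.of_integral_ne_zero (mgf_eq ▸ (exp_pos _).ne'))
  rw [mgf_eq, shift, ← Real.exp_add] at chernoff
  refine chernoff.trans_eq ?_
  rw [← Real.exp_nat_mul]
  congr 1
  field_simp
  ring

lemma tendsto_gaussMeasure_sq_norm_le (hσ : 0 < σ) {δ : ℝ} (hδ : 0 < δ) :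
    Tendsto (fun n : ℕ => (gaussMeasure n σ).real {w | ‖w‖ ^ 2 ≤ n * σ ^ 2 * (1 - δ)})
      atTop (nhds 0) := by
  have rate_pos : 0 < log (1 + δ) - δ * (1 - δ) := by
    have := one_sub_inv_le_log_of_pos (by positivity : 0 < 1 + δ)
    have : 1 - (1 + δ)⁻¹ - δ * (1 - δ) = δ ^ 3 / (1 + δ) := by field_simp; ring
    have : 0 < δ ^ 3 / (1 + δ) := by positivity
    linarith
  exact squeeze_zero (fun _ => measureReal_nonneg) (fun _ => gaussMeasure_sq_norm_le_le hσ hδ.le)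
    (tendsto_pow_atTop_nhds_zero_of_lt_one (exp_pos _).le (Real.exp_lt_one_iff.2 (by linarith)))

lemma measure_le_two_mul_measure_inter_inner_nonpos {E : Type*} [NormedAddCommGroup E]
    [InnerProductSpace ℝ E] [MeasurableSpace E] [MeasurableNeg E] (μ : Measure E)
    [μ.IsNegInvariant] {T : Set E} (hT : -T = T) (x : E) :
    μ T ≤ 2 * μ (T ∩ {w | ⟪x, w⟫ ≤ 0}) := by
  have cover : T ⊆ T ∩ {w | ⟪x, w⟫ ≤ 0} ∪ -(T ∩ {w | ⟪x, w⟫ ≤ 0}) := fun w hw => by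
    have hw' : -w ∈ T := by rwa [← Set.mem_neg, hT]
    rcases le_total ⟪x, w⟫ 0 with h | h
    · exact .inl ⟨hw, h⟩
    · exact .inr ⟨hw', by simpa [inner_neg_right] using h⟩
  calc μ T ≤ μ (T ∩ {w | ⟪x, w⟫ ≤ 0}) + μ (-(T ∩ {w | ⟪x, w⟫ ≤ 0})) :=
        (measure_mono cover).trans (measure_union_le _ _)
    _ = 2 * μ (T ∩ {w | ⟪x, w⟫ ≤ 0}) := by rw [Measure.measure_neg, two_mul]

/-- The noise vectors `w` that are not much shorter than `σ √n` and that do not point in the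
direction of the signal `x`. -/
def typicalNoise (n : ℕ) (σ δ : ℝ) (x : EuclideanSpace ℝ (Fin n)) :
    Set (EuclideanSpace ℝ (Fin n)) :=
  {w | n * σ ^ 2 * (1 - δ) < ‖w‖ ^ 2} ∩ {w | ⟪x, w⟫ ≤ 0}

lemma measurableSet_typicalNoise (n : ℕ) (σ δ : ℝ) (x : EuclideanSpace ℝ (Fin n)) :
    MeasurableSet (typicalNoise n σ δ x) :=
  (isOpen_lt (by fun_prop) (by fun_prop)).measurableSet.inter
    (isClosed_le (by fun_prop) (by fun_prop)).measurableSet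

lemma eventually_inv_four_le_gaussMeasure_typicalNoise (hσ : 0 < σ) {δ : ℝ} (hδ : 0 < δ) :
    ∀ᶠ n : ℕ in atTop, ∀ x, 4⁻¹ ≤ gaussMeasure n σ (typicalNoise n σ δ x) := by
  filter_upwards [(tendsto_gaussMeasure_sq_norm_le hσ hδ).eventually_le_const
    (by norm_num : (0 : ℝ) < 2⁻¹)] with n hn x
  have := isProbabilityMeasure_gaussMeasure n hσ
  set T : Set (EuclideanSpace ℝ (Fin n)) := {w | n * σ ^ 2 * (1 - δ) < ‖w‖ ^ 2}
  have half : 2⁻¹ ≤ gaussMeasure n σ T := by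
    have compl : {w : EuclideanSpace ℝ (Fin n) | ‖w‖ ^ 2 ≤ n * σ ^ 2 * (1 - δ)} = Tᶜ := by
      ext w
      simp [T]
    rw [compl, probReal_compl_eq_one_sub (isOpen_lt (by fun_prop) (by fun_prop)).measurableSet]
      at hn
    calc (2⁻¹ : ℝ≥0∞) = ENNReal.ofReal 2⁻¹ := by
          rw [ENNReal.ofReal_inv_of_pos two_pos, ENNReal.ofReal_ofNat]
      _ ≤ ENNReal.ofReal ((gaussMeasure n σ).real T) := ENNReal.ofReal_le_ofReal (by linarith)
      _ = gaussMeasure n σ T := ofReal_measureReal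
  have sym := half.trans (measure_le_two_mul_measure_inter_inner_nonpos (gaussMeasure n σ)
    (T := T) (by ext w; simp [T]) x)
  calc (4⁻¹ : ℝ≥0∞) = 2⁻¹ * 2⁻¹ := by
        rw [← ENNReal.mul_inv (by simp) (by simp)]
        norm_num
    _ ≤ 2⁻¹ * (2 * gaussMeasure n σ (typicalNoise n σ δ x)) := mul_le_mul_right sym _
    _ = gaussMeasure n σ (typicalNoise n σ δ x) := by
        rw [← mul_assoc, ENNReal.inv_mul_cancel (by simp) (by simp), one_mul]

end GaussianMeasure

section DecisionRegions

lemma isClosed_voronoi (n : ℕ) (S : Set (EuclideanSpace ℝ (Fin n))) : IsClosed (voronoi n S) := by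
  simp only [voronoi, Set.ofPred_forall]
  exact isClosed_biInter fun y _ => isClosed_le (by fun_prop) (by fun_prop)

lemma addHaar_inner_eq_const {E : Type*} [NormedAddCommGroup E] [InnerProductSpace ℝ E]
    [FiniteDimensional ℝ E] [MeasurableSpace E] [BorelSpace E] (μ : Measure E)
    [μ.IsAddHaarMeasure] {v : E} (hv : v ≠ 0) (c : ℝ) : μ {y | ⟪v, y⟫ = c} = 0 := by
  let A : AffineSubspace ℝ E :=
    (AffineSubspace.mk' c ⊥).comap (innerSL ℝ v).toLinearMap.toAffineMap
  have hA : (A : Set E) = {y | ⟪v, y⟫ = c} := by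
    ext y
    simp [A, AffineSubspace.mem_mk', sub_eq_zero]
  rw [← hA]
  refine Measure.addHaar_affineSubspace _ _ fun htop => hv ?_
  have mem (y : E) : ⟪v, y⟫ = c := by
    have : y ∈ (A : Set E) := by simp [htop]
    rwa [hA] at this
  rw [← inner_self_eq_zero (𝕜 := ℝ), mem v, ← mem 0, inner_zero_right]

/-- The observations `y` which the decoder that rounds `α • y` to the nearest point of `S` maps
to `x`. -/
def voronoiRegion (n : ℕ) (α : ℝ) (S : Set (EuclideanSpace ℝ (Fin n))) (x : S) :
    Set (EuclideanSpace ℝ (Fin n)) :=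
  {y | α • y - x ∈ voronoi n S}

lemma measurableSet_voronoiRegion (n : ℕ) (α : ℝ) (S : Set (EuclideanSpace ℝ (Fin n))) (x : S) :
    MeasurableSet (voronoiRegion n α S x) :=
  ((isClosed_voronoi n S).preimage (by fun_prop :
    Continuous fun y : EuclideanSpace ℝ (Fin n) => α • y - x)).measurableSet

lemma add_mem_voronoiRegion_iff {n : ℕ} {α : ℝ} {S : Set (EuclideanSpace ℝ (Fin n))} {x : S}
    {w : EuclideanSpace ℝ (Fin n)} : (x : EuclideanSpace ℝ (Fin n)) + w ∈ voronoiRegion n α S x ↔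
      (α - 1) • (x : EuclideanSpace ℝ (Fin n)) + α • w ∈ voronoi n S := by
  rw [voronoiRegion, Set.mem_ofPred_eq]
  congr! 1
  module

lemma pairwise_aedisjoint_voronoiRegion {n : ℕ} {α : ℝ} (hα : α ≠ 0)
    (L : Submodule ℤ (EuclideanSpace ℝ (Fin n))) :
    Pairwise (Function.onFun (AEDisjoint volume) (voronoiRegion n α (L : Set _))) := by
  intro x x' hne
  have hd : (x' : EuclideanSpace ℝ (Fin n)) - x ≠ 0 := fun h =>
    hne (Subtype.ext (sub_eq_zero.1 h).symm)
  set d := (x' : EuclideanSpace ℝ (Fin n)) - x with d_def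
  refine measure_mono_null (fun y hy => ?_)
    (addHaar_inner_eq_const volume hd ((‖d‖ ^ 2 / 2 + ⟪d, (x : EuclideanSpace ℝ (Fin n))⟫) / α))
  have upper : ⟪α • y - x, d⟫ ≤ ‖d‖ ^ 2 / 2 := hy.1 d (L.sub_mem x'.2 x.2)
  have lower : ⟪α • y - x', -d⟫ ≤ ‖-d‖ ^ 2 / 2 :=
    hy.2 (-d) (by rw [d_def, neg_sub]; exact L.sub_mem x.2 x'.2)
  rw [show (x' : EuclideanSpace ℝ (Fin n)) = x + d by simp [d_def], ← sub_sub, inner_neg_right,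
    inner_sub_left _ d, real_inner_self_eq_norm_sq, norm_neg] at lower
  rw [inner_sub_left, real_inner_smul_left] at upper lower
  rw [Set.mem_ofPred_eq, eq_div_iff hα, real_inner_comm y,
    real_inner_comm (x : EuclideanSpace ℝ (Fin n))]
  linarith

end DecisionRegions

section ChangeOfMeasure

lemma mul_withDensity_inter_preimage_le {G : Type*} [AddGroup G] [MeasurableSpace G]
    [MeasurableAdd G] {μ : Measure G} [μ.IsAddLeftInvariant] {f g : G → ℝ≥0∞}
    (hf : Measurable f) (hg : Measurable g) {a b : ℝ≥0∞} {x : G} {T D : Set G}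
    (hT : MeasurableSet T) (hD : MeasurableSet D) (h : ∀ w ∈ T, a * f w ≤ b * g (x + w)) :
    a * μ.withDensity f (T ∩ (x + ·) ⁻¹' D) ≤ b * μ.withDensity g D := by
  have hTD : MeasurableSet (T ∩ (x + ·) ⁻¹' D) := hT.inter (measurable_const_add x hD)
  rw [withDensity_apply _ hTD, withDensity_apply _ hD, ← lintegral_const_mul _ hf,
    ← lintegral_const_mul _ hg]
  calc ∫⁻ w in T ∩ (x + ·) ⁻¹' D, a * f w ∂μ
      ≤ ∫⁻ w in T ∩ (x + ·) ⁻¹' D, b * g (x + w) ∂μ := setLIntegral_mono' hTD fun w hw => h w hw.1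
    _ ≤ ∫⁻ w in (x + ·) ⁻¹' D, b * g (x + w) ∂μ := lintegral_mono_set Set.inter_subset_right
    _ = ∫⁻ y in D, b * g y ∂μ :=
        (measurePreserving_add_left μ x).setLIntegral_comp_preimage hD (hg.const_mul b)

-- On the part of `T i` where decoding succeeds, pass from `μ` to `Q`, under which the decision
-- regions `D i` compete for total mass one.
lemma tsum_mul_measure_le_tsum_mul_measure_add {ι Ω Ω' : Type*} [MeasurableSpace Ω]
    [MeasurableSpace Ω'] {p : ι → ℝ≥0∞} {μ : Measure Ω} {Q : Measure Ω'} [IsProbabilityMeasure Q]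
    {T E : ι → Set Ω} {D : ι → Set Ω'} {γ : ℝ≥0∞} (hD : ∀ i, NullMeasurableSet (D i) Q)
    (hdisj : Pairwise (Function.onFun (AEDisjoint Q) D))
    (h : ∀ i, p i * μ (T i \ E i) ≤ γ * Q (D i)) :
    ∑' i, p i * μ (T i) ≤ ∑' i, p i * μ (E i) + γ := by
  have total : ∑' i, Q (D i) ≤ 1 :=
    (tsum_meas_le_meas_iUnion_of_disjoint₀ Q hD hdisj).trans prob_le_one
  calc ∑' i, p i * μ (T i) ≤ ∑' i, (p i * μ (E i) + γ * Q (D i)) := by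
        refine ENNReal.tsum_le_tsum fun i => ?_
        calc p i * μ (T i) ≤ p i * (μ (E i) + μ (T i \ E i)) := by
              gcongr
              exact (measure_mono (by simp)).trans (measure_union_le _ _)
          _ ≤ p i * μ (E i) + γ * Q (D i) := by
              rw [mul_add]
              exact add_le_add_right (h i) _
    _ = ∑' i, p i * μ (E i) + γ * ∑' i, Q (D i) := by rw [ENNReal.tsum_add, ENNReal.tsum_mul_left]
    _ ≤ ∑' i, p i * μ (E i) + γ := by
        gcongr
        exact mul_le_of_le_one_right' total

end ChangeOfMeasure

section DiscreteGaussian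

variable {n : ℕ} {σ : ℝ}

/-- The energy `‖x‖² / (2σ²)`, whose Gibbs distribution on `S` is the discrete Gaussian
`D_{S,σ}`. -/
def gaussEnergy (n : ℕ) (σ : ℝ) (S : Set (EuclideanSpace ℝ (Fin n))) (x : S) : ℝ :=
  ‖(x : EuclideanSpace ℝ (Fin n))‖ ^ 2 / (2 * σ ^ 2)

lemma gaussEnergy_nonneg (S : Set (EuclideanSpace ℝ (Fin n))) (x : S) :
    0 ≤ gaussEnergy n σ S x := by
  unfold gaussEnergy
  positivity

lemma gaussF_div_gaussMass (hσ : 0 < σ) (S : Set (EuclideanSpace ℝ (Fin n))) (x : S) :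
    gaussF n σ x / gaussMass n σ S = gibbsWeight (gaussEnergy n σ S) x := by
  have factor (y : S) :
      gaussF n σ y = (2 * π * σ ^ 2) ^ (-(n : ℝ) / 2) * exp (-gaussEnergy n σ S y) := by
    rw [gaussF, gaussEnergy, neg_div (2 * σ ^ 2)]
  rw [gaussMass, gibbsWeight]
  simp_rw [factor]
  rw [tsum_mul_left, mul_div_mul_left _ _ (by positivity)]

section Lattice

variable (L : Submodule ℤ (EuclideanSpace ℝ (Fin n)))

lemma exp_neg_gaussEnergy (c : ℝ) (x : (L : Set (EuclideanSpace ℝ (Fin n)))) :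
    exp (-(c * gaussEnergy n σ L x)) =
      exp (-(c / (2 * σ ^ 2) * ‖(x : EuclideanSpace ℝ (Fin n))‖ ^ 2)) := by
  rw [gaussEnergy]
  congr 1
  ring

variable [DiscreteTopology L]

lemma summable_exp_neg_mul_gaussEnergy (hσ : 0 < σ) {c : ℝ} (hc : 0 < c) :
    Summable fun x => exp (-(c * gaussEnergy n σ L x)) := by
  simp_rw [exp_neg_gaussEnergy]
  exact summable_exp_neg_mul_sq_norm L (by positivity)

lemma tsum_exp_neg_half_gaussEnergy_le (hσ : 0 < σ) :
    ∑' x, exp (-(gaussEnergy n σ L x / 2)) ≤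
      exp n * ∑' x, exp (-gaussEnergy n σ L x) := by
  have theta_eq (c : ℝ) :
      ∑' x, exp (-(c * gaussEnergy n σ L x)) =
        theta (L : Set (EuclideanSpace ℝ (Fin n))) (c / (2 * σ ^ 2)) := by
    simp_rw [exp_neg_gaussEnergy, theta]
  have half := theta_eq 2⁻¹
  have full := theta_eq 1
  simp_rw [inv_mul_eq_div] at half
  simp_rw [one_mul] at full
  rw [half, full]
  have rank_le : Module.finrank ℤ L ≤ n := by simpa using finrank_int_le_finrank_real L
  have doubling := sq_theta_le_two_pow_finrank_mul_sq_theta L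
    (by positivity : 0 < 2⁻¹ / (2 * σ ^ 2))
  rw [← mul_div_assoc, mul_inv_cancel₀ two_ne_zero] at doubling
  have theta_nonneg : 0 ≤ theta (L : Set (EuclideanSpace ℝ (Fin n))) (1 / (2 * σ ^ 2)) :=
    tsum_nonneg fun _ => (exp_pos _).le
  refine (sq_le_sq₀ (tsum_nonneg fun _ => (exp_pos _).le) (by positivity)).1 (doubling.trans ?_)
  rw [mul_pow]
  gcongr
  calc (2 : ℝ) ^ Module.finrank ℤ L ≤ 2 ^ n := pow_le_pow_right₀ one_le_two rank_le
    _ ≤ (exp 1 ^ 2) ^ n := by gcongr; nlinarith [add_one_le_exp (1 : ℝ)]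
    _ = exp n ^ 2 := by rw [← Real.exp_one_pow n]; ring

instance nonempty_coe_submodule : Nonempty (L : Set (EuclideanSpace ℝ (Fin n))) :=
  ⟨0, L.zero_mem⟩

lemma summable_exp_neg_gaussEnergy (hσ : 0 < σ) :
    Summable fun x => exp (-gaussEnergy n σ L x) := by
  simpa using summable_exp_neg_mul_gaussEnergy L hσ one_pos

lemma gaussEnergy_second_moment (hσ : 0 < σ) (hn : 1 ≤ n) :
    Summable (fun x => gibbsWeight (gaussEnergy n σ L) x *
        gaussEnergy n σ L x ^ 2) ∧
      ∑' x, gibbsWeight (gaussEnergy n σ L) x *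
        gaussEnergy n σ L x ^ 2 ≤ 24 * (n : ℝ) ^ 2 := by
  refine gibbsWeight_second_moment (mod_cast hn) (gaussEnergy_nonneg _)
    (summable_exp_neg_gaussEnergy L hσ) ?_ (tsum_exp_neg_half_gaussEnergy_le L hσ)
  simpa [inv_mul_eq_div] using summable_exp_neg_mul_gaussEnergy L hσ (c := 2⁻¹) (by norm_num)

lemma dgEntropy_eq_log_add_gibbsMean (hσ : 0 < σ) (hn : 1 ≤ n) :
    dgEntropy n σ L =
      log (∑' x, exp (-gaussEnergy n σ L x)) +
        gibbsMean (gaussEnergy n σ L) := by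
  simp_rw [dgEntropy, gaussF_div_gaussMass hσ]
  exact neg_tsum_gibbsWeight_mul_log (summable_exp_neg_gaussEnergy L hσ)
    (summable_gibbsWeight_mul (summable_exp_neg_gaussEnergy L hσ) (gaussEnergy_nonneg _)
      (gaussEnergy_second_moment L hσ hn).1)

lemma log_tsum_exp_neg_gaussEnergy_nonneg (hσ : 0 < σ) :
    0 ≤ log (∑' x, exp (-gaussEnergy n σ L x)) := by
  refine log_nonneg ?_
  simpa [gaussEnergy] using (summable_exp_neg_gaussEnergy L hσ).le_tsum ⟨0, L.zero_mem⟩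
    fun _ _ => (exp_pos _).le

lemma dgEntropy_nonneg (hσ : 0 < σ) (hn : 1 ≤ n) :
    0 ≤ dgEntropy n σ L := by
  rw [dgEntropy_eq_log_add_gibbsMean L hσ hn]
  exact add_nonneg (log_tsum_exp_neg_gaussEnergy_nonneg L hσ)
    (tsum_nonneg fun x => mul_nonneg (gibbsWeight_nonneg _ x) (gaussEnergy_nonneg _ x))

end Lattice

end DiscreteGaussian

section ErrorProbability

variable {n : ℕ} {σs σw : ℝ}

/-- The error probability when `X ~ D_{S,σs}` is observed through the additive noise
`W ~ N(0, σw² Iₙ)`, for a decoder that outputs `x` exactly when `X + W` lies in `D x`. -/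
def dgErrorProb (n : ℕ) (σs σw : ℝ) (S : Set (EuclideanSpace ℝ (Fin n)))
    (D : S → Set (EuclideanSpace ℝ (Fin n))) : ℝ :=
  ∑' x : S, gaussF n σs x / gaussMass n σs S *
    ∫ w in {w | (x : EuclideanSpace ℝ (Fin n)) + w ∉ D x}, gaussF n σw w

lemma dgErrorProb_eq_tsum_gibbsWeight_mul (hσs : 0 < σs) (hσw : 0 < σw)
    {S : Set (EuclideanSpace ℝ (Fin n))} {D : S → Set (EuclideanSpace ℝ (Fin n))}
    (hD : ∀ x, MeasurableSet (D x)) :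
    dgErrorProb n σs σw S D = ∑' x, gibbsWeight (gaussEnergy n σs S) x *
      (gaussMeasure n σw).real {w | (x : EuclideanSpace ℝ (Fin n)) + w ∉ D x} := by
  refine tsum_congr fun x => ?_
  have hE : MeasurableSet {w | (x : EuclideanSpace ℝ (Fin n)) + w ∉ D x} :=
    (measurable_const_add (x : EuclideanSpace ℝ (Fin n)) (hD x)).compl
  rw [gaussF_div_gaussMass hσs, real_gaussMeasure hσw hE]

lemma dgErrorProb_nonneg (hσs : 0 < σs) (hσw : 0 < σw) {S : Set (EuclideanSpace ℝ (Fin n))}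
    {D : S → Set (EuclideanSpace ℝ (Fin n))} : 0 ≤ dgErrorProb n σs σw S D := by
  refine tsum_nonneg fun x => ?_
  rw [gaussF_div_gaussMass hσs]
  exact mul_nonneg (gibbsWeight_nonneg _ x) (integral_nonneg fun w => (gaussF_pos hσw w).le)

variable (L : Submodule ℤ (EuclideanSpace ℝ (Fin n))) [DiscreteTopology L]
  {D : ↥(L : Set (EuclideanSpace ℝ (Fin n))) → Set (EuclideanSpace ℝ (Fin n))}

lemma ofReal_dgErrorProb (hσs : 0 < σs) (hσw : 0 < σw) (hD : ∀ x, MeasurableSet (D x)) :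
    ENNReal.ofReal (dgErrorProb n σs σw L D) =
      ∑' x, ENNReal.ofReal (gibbsWeight (gaussEnergy n σs L) x) *
        gaussMeasure n σw {w | (x : EuclideanSpace ℝ (Fin n)) + w ∉ D x} := by
  have := isProbabilityMeasure_gaussMeasure n hσw
  rw [dgErrorProb_eq_tsum_gibbsWeight_mul hσs hσw hD, ENNReal.ofReal_tsum_of_nonneg]
  · exact tsum_congr fun x => by
      rw [ENNReal.ofReal_mul (gibbsWeight_nonneg _ x), ofReal_measureReal]
  · exact fun x => mul_nonneg (gibbsWeight_nonneg _ x) measureReal_nonneg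
  · exact .of_nonneg_of_le (fun x => mul_nonneg (gibbsWeight_nonneg _ x) measureReal_nonneg)
      (fun x => mul_le_of_le_one_right (gibbsWeight_nonneg _ x) measureReal_le_one)
      (hasSum_gibbsWeight (summable_exp_neg_gaussEnergy L hσs)).summable

lemma dgErrorProb_le_one (hσs : 0 < σs) (hσw : 0 < σw) (hD : ∀ x, MeasurableSet (D x)) :
    dgErrorProb n σs σw L D ≤ 1 := by
  have := isProbabilityMeasure_gaussMeasure n hσw
  rw [dgErrorProb_eq_tsum_gibbsWeight_mul hσs hσw hD]
  have total := hasSum_gibbsWeight (summable_exp_neg_gaussEnergy L hσs)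
  have le_weight (x) := mul_le_of_le_one_right
    (gibbsWeight_nonneg (gaussEnergy n σs L) x)
    (measureReal_le_one (μ := gaussMeasure n σw)
      (s := {w | (x : EuclideanSpace ℝ (Fin n)) + w ∉ D x}))
  exact total.tsum_eq ▸ (Summable.of_nonneg_of_le
    (fun x => mul_nonneg (gibbsWeight_nonneg _ x) measureReal_nonneg) le_weight
    total.summable).tsum_le_tsum le_weight total.summable

end ErrorProbability

section Converse

lemma neg_energy_add_le_neg_sub {N δ s r W v logZ m ℓ : ℝ} (hN : 0 ≤ N) (hδ : 0 ≤ δ)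
    (hr0 : 0 ≤ r) (hr1 : r ≤ 1) (hv : 0 ≤ v) (hvr : v * r ≤ 1) (hlogZ : 0 ≤ logZ)
    (hs : m - N * δ ≤ s) (hW : N * (1 - δ) / 2 ≤ W) (hlow : N * (ℓ / 2 + 3 * δ) ≤ logZ + m)
    (hhigh : logZ + m ≤ N * v / 2) :
    -s - logZ + N / 2 * ℓ - W ≤ -(N * δ) - (s * r + W * (1 - v * r)) := by
  have hNδ : 0 ≤ N * δ := mul_nonneg hN hδ
  have signal : (m - N * δ) * (1 - r) ≤ s * (1 - r) :=
    mul_le_mul_of_nonneg_right hs (sub_nonneg.2 hr1)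
  have noise : N * (1 - δ) / 2 * (v * r) ≤ W * (v * r) :=
    mul_le_mul_of_nonneg_right hW (mul_nonneg hv hr0)
  have mean : m * r ≤ N * v / 2 * r := mul_le_mul_of_nonneg_right (by linarith) hr0
  have slack_noise : N * δ * (v * r) ≤ N * δ := mul_le_of_le_one_right hNδ hvr
  have slack_signal : 0 ≤ N * δ * r := mul_nonneg hNδ hr0
  nlinarith

/-- The points of `S` whose energy is not much below the mean energy of `D_{S,σ}`. -/
def typicalSignal (n : ℕ) (σ δ : ℝ) (S : Set (EuclideanSpace ℝ (Fin n))) : Set S :=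
  {x | gibbsMean (gaussEnergy n σ S) - n * δ ≤ gaussEnergy n σ S x}

variable {n : ℕ} {σs σw τ v δ : ℝ} (L : Submodule ℤ (EuclideanSpace ℝ (Fin n)))
  [DiscreteTopology L]

-- The half-space condition on the noise gives `‖x + w‖² ≤ ‖x‖² + ‖w‖²`.
lemma gibbsWeight_mul_gaussF_le (hσs : 0 < σs) (hσw : 0 < σw) (hτ : 0 < τ) (hv : 0 ≤ v)
    (hτ_sq : τ ^ 2 = σw ^ 2 + v * σs ^ 2) (hle : σs ^ 2 ≤ τ ^ 2) (hδ : 0 ≤ δ) (hn : 1 ≤ n)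
    (hlow : n * (log (1 + v * (σs ^ 2 / σw ^ 2)) / 2 + 3 * δ) ≤
      dgEntropy n σs L)
    (hhigh : dgEntropy n σs L ≤ n * v / 2)
    {x : (L : Set (EuclideanSpace ℝ (Fin n)))} {w : EuclideanSpace ℝ (Fin n)}
    (hx : x ∈ typicalSignal n σs δ L) (hw : w ∈ typicalNoise n σw δ x) :
    gibbsWeight (gaussEnergy n σs L) x * gaussF n σw w ≤
      exp (-(n * δ)) * gaussF n τ (x + w) := by
  have hw_norm : n * σw ^ 2 * (1 - δ) < ‖w‖ ^ 2 := hw.1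
  have hw_inner : ⟪(x : EuclideanSpace ℝ (Fin n)), w⟫ ≤ 0 := hw.2
  rw [dgEntropy_eq_log_add_gibbsMean L hσs hn] at hlow hhigh
  have noise_energy : n * (1 - δ) / 2 ≤ ‖w‖ ^ 2 / (2 * σw ^ 2) := by
    rw [le_div_iff₀ (by positivity)]
    linarith
  have noise_ratio : σw ^ 2 / τ ^ 2 = 1 - v * (σs ^ 2 / τ ^ 2) := by
    field_simp
    linarith
  have exponent := neg_energy_add_le_neg_sub (r := σs ^ 2 / τ ^ 2) n.cast_nonneg hδ
    (by positivity) ((div_le_one (by positivity)).2 hle) hv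
    (by linarith [(by positivity : 0 ≤ σw ^ 2 / τ ^ 2)])
    (log_tsum_exp_neg_gaussEnergy_nonneg L hσs) hx noise_energy hlow hhigh
  have norm_add : ‖(x : EuclideanSpace ℝ (Fin n)) + w‖ ^ 2 / (2 * τ ^ 2) ≤
      gaussEnergy n σs L x * (σs ^ 2 / τ ^ 2) +
        ‖w‖ ^ 2 / (2 * σw ^ 2) * (σw ^ 2 / τ ^ 2) := by
    calc ‖(x : EuclideanSpace ℝ (Fin n)) + w‖ ^ 2 / (2 * τ ^ 2)
        ≤ (‖(x : EuclideanSpace ℝ (Fin n))‖ ^ 2 + ‖w‖ ^ 2) / (2 * τ ^ 2) := by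
          gcongr
          rw [norm_add_sq_real]
          linarith
      _ = _ := by
          rw [gaussEnergy]
          field_simp
  have log_variance :
      log (2 * π * τ ^ 2) = log (2 * π * σw ^ 2) + log (1 + v * (σs ^ 2 / σw ^ 2)) := by
    rw [← log_mul (by positivity) (by positivity), hτ_sq]
    congr 1
    field_simp
  rw [gibbsWeight, ← exp_log (tsum_exp_neg_pos (summable_exp_neg_gaussEnergy L hσs)),
    ← Real.exp_sub, gaussF_eq_exp hσw, gaussF_eq_exp hτ, ← Real.exp_add, ← Real.exp_add,
    log_variance]
  refine exp_le_exp.2 ?_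
  rw [← noise_ratio] at exponent
  linarith

lemma ofReal_le_tsum_mul_gaussMeasure_typical (hσs : 0 < σs) (hδ0 : 0 ≤ δ) (hδ1 : δ ≤ 1)
    (hn : 1 ≤ n) (hnoise : ∀ x, 4⁻¹ ≤ gaussMeasure n σw (typicalNoise n σw δ x)) :
    ENNReal.ofReal (δ ^ 2 / 96) ≤ ∑' x, ENNReal.ofReal (gibbsWeight (gaussEnergy n σs L) x) *
      gaussMeasure n σw {w | x ∈ typicalSignal n σs δ L ∧ w ∈ typicalNoise n σw δ x} := by
  set p := gibbsWeight (gaussEnergy n σs L)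
  set A := typicalSignal n σs δ L
  have signal_mass : δ ^ 2 / 24 ≤ ∑' x, A.indicator p x :=
    have moment := gaussEnergy_second_moment L hσs hn
    le_tsum_indicator_gibbsWeight (mod_cast hn) (gaussEnergy_nonneg _)
      (summable_exp_neg_gaussEnergy L hσs) moment.1 moment.2 hδ0 hδ1
  have termwise (x) : ENNReal.ofReal (A.indicator p x * 4⁻¹) ≤
      ENNReal.ofReal (p x) * gaussMeasure n σw {w | x ∈ A ∧ w ∈ typicalNoise n σw δ x} := by
    by_cases hx : x ∈ A
    · rw [Set.indicator_of_mem hx, ENNReal.ofReal_mul (gibbsWeight_nonneg _ x),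
        ENNReal.ofReal_inv_of_pos four_pos, ENNReal.ofReal_ofNat]
      simpa [hx] using mul_le_mul_right (hnoise x) (ENNReal.ofReal (p x))
    · simp [hx]
  have indicator_nonneg (x) : 0 ≤ A.indicator p x :=
    Set.indicator_nonneg (fun x _ => gibbsWeight_nonneg _ x) x
  have summable : Summable (A.indicator p) :=
    (hasSum_gibbsWeight (summable_exp_neg_gaussEnergy L hσs)).summable.indicator A
  calc ENNReal.ofReal (δ ^ 2 / 96) ≤ ENNReal.ofReal (∑' x, A.indicator p x * 4⁻¹) := by
        rw [tsum_mul_right]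
        exact ENNReal.ofReal_le_ofReal (by linarith)
    _ = ∑' x, ENNReal.ofReal (A.indicator p x * 4⁻¹) :=
        ENNReal.ofReal_tsum_of_nonneg (fun x => by have := indicator_nonneg x; positivity)
          (summable.mul_right _)
    _ ≤ _ := ENNReal.tsum_le_tsum termwise

lemma le_dgErrorProb (hσs : 0 < σs) (hσw : 0 < σw) (hv : 0 ≤ v)
    (hle : σs ^ 2 ≤ σw ^ 2 + v * σs ^ 2) (hδ0 : 0 ≤ δ) (hδ1 : δ ≤ 1) (hn : 1 ≤ n)
    (hlow : n * (log (1 + v * (σs ^ 2 / σw ^ 2)) / 2 + 3 * δ) ≤ dgEntropy n σs L)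
    (hhigh : dgEntropy n σs L ≤ n * v / 2)
    (hnoise : ∀ x, 4⁻¹ ≤ gaussMeasure n σw (typicalNoise n σw δ x))
    {D : ↥(L : Set (EuclideanSpace ℝ (Fin n))) → Set (EuclideanSpace ℝ (Fin n))}
    (hD : ∀ x, MeasurableSet (D x)) (hdisj : Pairwise (Function.onFun (AEDisjoint volume) D)) :
    δ ^ 2 / 96 - exp (-(n * δ)) ≤ dgErrorProb n σs σw L D := by
  obtain ⟨τ, hτ, hτ_sq⟩ : ∃ τ, 0 < τ ∧ τ ^ 2 = σw ^ 2 + v * σs ^ 2 :=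
    ⟨√(σw ^ 2 + v * σs ^ 2), by positivity, sq_sqrt (by positivity)⟩
  have := isProbabilityMeasure_gaussMeasure n hτ
  have change_of_measure (x) : ENNReal.ofReal (gibbsWeight (gaussEnergy n σs L) x) *
      gaussMeasure n σw ({w | x ∈ typicalSignal n σs δ L ∧ w ∈ typicalNoise n σw δ x} \
        {w | (x : EuclideanSpace ℝ (Fin n)) + w ∉ D x}) ≤
      ENNReal.ofReal (exp (-(n * δ))) * gaussMeasure n τ (D x) := by
    by_cases hx : x ∈ typicalSignal n σs δ L
    · have success : {w | x ∈ typicalSignal n σs δ L ∧ w ∈ typicalNoise n σw δ x} \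
          {w | (x : EuclideanSpace ℝ (Fin n)) + w ∉ D x} =
          typicalNoise n σw δ x ∩ ((x : EuclideanSpace ℝ (Fin n)) + ·) ⁻¹' D x := by
        ext w
        simp [hx]
      rw [success]
      refine mul_withDensity_inter_preimage_le measurable_gaussF.ennreal_ofReal
        measurable_gaussF.ennreal_ofReal (measurableSet_typicalNoise n σw δ x) (hD x)
        fun w hw => ?_
      rw [← ENNReal.ofReal_mul (gibbsWeight_nonneg _ x), ← ENNReal.ofReal_mul (exp_pos _).le]
      exact ENNReal.ofReal_le_ofReal (gibbsWeight_mul_gaussF_le L hσs hσw hτ hv hτ_sq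
        (hle.trans_eq hτ_sq.symm) hδ0 hn hlow hhigh hx hw)
    · simp [hx]
  have disjoint : Pairwise (Function.onFun (AEDisjoint (gaussMeasure n τ)) D) :=
    fun x y hxy => withDensity_absolutelyContinuous _ _ (hdisj hxy)
  have bound := (ofReal_le_tsum_mul_gaussMeasure_typical L hσs hδ0 hδ1 hn hnoise).trans
    (tsum_mul_measure_le_tsum_mul_measure_add (fun x => (hD x).nullMeasurableSet) disjoint
      change_of_measure)
  rw [← ofReal_dgErrorProb L hσs hσw hD,
    ← ENNReal.ofReal_add (dgErrorProb_nonneg hσs hσw) (exp_pos _).le] at bound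
  linarith [(ENNReal.ofReal_le_ofReal_iff
    (add_nonneg (dgErrorProb_nonneg hσs hσw) (exp_pos _).le)).1 bound]

end Converse

section AsymptoticConverse

variable {σs σw h : ℝ}

lemma le_add_mul_of_one_add_mul_div_lt_exp {a b v : ℝ} (ha : 0 ≤ a) (hb : 0 < b) (hv : 0 < v)
    (h : 1 + v * (a / b) < exp v) : a ≤ b + v * a := by
  rcases le_total 1 v with hv1 | hv1
  · nlinarith
  · have exp_bound : exp v * (1 - v) ≤ 1 := by
      calc exp v * (1 - v) ≤ exp v * exp (-v) := by
            gcongr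
            exact one_sub_le_exp_neg v
        _ = 1 := by rw [← Real.exp_add, add_neg_cancel, exp_zero]
    have ratio_bound : a / b * (1 - v) ≤ 1 :=
      le_of_mul_le_mul_left (by nlinarith) hv
    rw [div_mul_eq_mul_div, div_le_one hb] at ratio_bound
    linarith

lemma exists_rate_gap {u : ℝ} (hu : 0 < u) (hh : 0 ≤ h) (hhu : 1 + 2 * h * u < exp (2 * h)) :
    ∃ v δ, 0 < v ∧ h < v / 2 ∧ 1 + v * u < exp v ∧ 0 < δ ∧ δ ≤ 1 ∧
      log (1 + v * u) / 2 + 3 * δ < h := by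
  obtain ⟨v, hv, hv'⟩ := exists_between ((lt_div_iff₀ hu).2 (lt_sub_iff_add_lt'.2 hhu))
  rw [lt_div_iff₀ hu, lt_sub_iff_add_lt'] at hv'
  have hlog : log (1 + v * u) < 2 * h := (log_lt_iff_lt_exp (by nlinarith)).2 hv'
  refine ⟨v, min 1 ((h - log (1 + v * u) / 2) / 4), by linarith, by linarith,
    hv'.trans (exp_lt_exp.2 hv), lt_min one_pos (by linarith), min_le_left _ _, ?_⟩
  linarith [min_le_right 1 ((h - log (1 + v * u) / 2) / 4)]

lemma tendsto_exp_neg_natCast_mul {δ : ℝ} (hδ : 0 < δ) :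
    Tendsto (fun n : ℕ => exp (-(n * δ))) atTop (nhds 0) :=
  tendsto_exp_neg_atTop_nhds_zero.comp (tendsto_natCast_atTop_atTop.atTop_mul_const hδ)

theorem converse_low_snr_general (hσs : 0 < σs) (hσw : 0 < σw)
    (hh : 1 + 2 * h * (σs ^ 2 / σw ^ 2) < exp (2 * h))
    (L : ∀ n, Submodule ℤ (EuclideanSpace ℝ (Fin n))) [∀ n, DiscreteTopology (L n)]
    (D : ∀ n, ↥(L n : Set (EuclideanSpace ℝ (Fin n))) → Set (EuclideanSpace ℝ (Fin n)))
    (hD : ∀ n x, MeasurableSet (D n x))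
    (hdisj : ∀ n, Pairwise (Function.onFun (AEDisjoint volume) (D n)))
    (hH : Tendsto (fun n : ℕ => 1 / (n : ℝ) * dgEntropy n σs (L n)) atTop (nhds h)) :
    0 < liminf (fun n => dgErrorProb n σs σw (L n) (D n)) atTop := by
  have h_nonneg : 0 ≤ h := ge_of_tendsto hH <| (eventually_ge_atTop 1).mono fun n hn =>
    mul_nonneg (by positivity) (dgEntropy_nonneg (L n) hσs hn)
  obtain ⟨v, δ, hv, h_lt, hv_exp, hδ, hδ1, lt_h⟩ := exists_rate_gap (by positivity) h_nonneg hh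
  have lower : ∀ᶠ n in atTop, δ ^ 2 / 192 ≤ dgErrorProb n σs σw (L n) (D n) := by
    filter_upwards [hH.eventually_const_le lt_h, hH.eventually_le_const h_lt,
      (tendsto_exp_neg_natCast_mul hδ).eventually_le_const (by positivity : 0 < δ ^ 2 / 192),
      eventually_inv_four_le_gaussMeasure_typicalNoise hσw hδ, eventually_ge_atTop 1]
      with n hlow hhigh hexp hnoise hn
    rw [one_div_mul_eq_div, le_div_iff₀' (by positivity)] at hlow
    rw [one_div_mul_eq_div, div_le_iff₀' (by positivity), ← mul_div_assoc] at hhigh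
    have variance_le : σs ^ 2 ≤ σw ^ 2 + v * σs ^ 2 :=
      le_add_mul_of_one_add_mul_div_lt_exp (sq_nonneg _) (by positivity) hv hv_exp
    linarith [le_dgErrorProb (L n) hσs hσw hv.le variance_le hδ.le hδ1 hn hlow hhigh hnoise
      (hD n) (hdisj n)]
  refine (by positivity : 0 < δ ^ 2 / 192).trans_le (le_liminf_of_le ?_ lower)
  exact (isBoundedUnder_of
    ⟨1, fun n => dgErrorProb_le_one (L n) hσs hσw (hD n)⟩).isCoboundedUnder_ge

lemma one_add_capacity_mul_lt_exp {u : ℝ} (hu0 : 0 < u) (hu1 : u < 1) :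
    1 + 2 * (1 / 2 * log (1 + u)) * u < exp (2 * (1 / 2 * log (1 + u))) := by
  have := log_le_sub_one_of_pos (by positivity : 0 < 1 + u)
  rw [← mul_assoc, mul_one_div_cancel two_ne_zero, one_mul, exp_log (by positivity)]
  nlinarith

end AsymptoticConverse

/-- Converse: if `σ_s² < σ_w²` and the per-symbol entropies of the centered
discrete Gaussians `D_{Λ_n,σ_s}` tend to capacity `(1/2)log(1+σ_s²/σ_w²)`, then the MAP error
probabilities `P_e(Λ_n)` are bounded away from `0`. -/
theorem converse_low_snr (σs σw : ℝ) (hσs : 0 < σs) (hσw : 0 < σw)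
    (hsnr : σs ^ 2 < σw ^ 2)
    (α : ℝ) (hα : α = σs ^ 2 / (σs ^ 2 + σw ^ 2))
    (L : ∀ n : ℕ, Submodule ℤ (EuclideanSpace ℝ (Fin n)))
    (hdisc : ∀ n, DiscreteTopology (L n))
    (hlat : ∀ n, @IsZLattice ℝ _ _ _ _ (L n) (hdisc n))
    (Pe : ℕ → ℝ)
    (hPe : ∀ n, Pe n = ∑' x : (L n : Set (EuclideanSpace ℝ (Fin n))),
        (gaussF n σs x / gaussMass n σs (L n : Set (EuclideanSpace ℝ (Fin n)))) *
          ∫ w in {w : EuclideanSpace ℝ (Fin n) |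
              (α - 1) • (x : EuclideanSpace ℝ (Fin n)) + α • w ∉
                voronoi n (L n : Set (EuclideanSpace ℝ (Fin n)))},
            gaussF n σw w)
    (hH : Filter.Tendsto
        (fun n : ℕ => (1 / (n : ℝ)) *
          dgEntropy n σs (L n : Set (EuclideanSpace ℝ (Fin n))))
        Filter.atTop (nhds ((1 / 2) * Real.log (1 + σs ^ 2 / σw ^ 2)))) :
    0 < Filter.liminf Pe Filter.atTop := by
  have hα0 : α ≠ 0 := by
    rw [hα]
    positivity
  have Pe_eq : Pe = fun n => dgErrorProb n σs σw (L n) (voronoiRegion n α (L n)) := by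
    simp_rw [funext hPe, dgErrorProb, add_mem_voronoiRegion_iff]
  rw [Pe_eq]
  exact converse_low_snr_general hσs hσw
    (one_add_capacity_mul_lt_exp (by positivity) ((div_lt_one (by positivity)).2 hsnr)) L _
    (fun n => measurableSet_voronoiRegion n α (L n))
    (fun n => pairwise_aedisjoint_voronoiRegion hα0 (L n)) hH
end
end

section
/- Let Λ ⊂ ℝ^n be a full-rank lattice, σ_s > 0, X ~ D_{Λ, σ_s}, and P_0(Λ) = Pr[X = 0] = ((2πσ_s²)^{n/2} · f_{σ_s}(Λ))^{−1}. Then (1/n)·H(X) ≤ −(1/n)·log P_0(Λ) + π·(1 − P_0(Λ)) + 1.8·e^{−1.7 n}/n. -/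
open MeasureTheory Real Filter Pointwise
open scoped ENNReal RealInnerProductSpace

noncomputable section

/-!
Let `θ(a) = ∑_{y ∈ L} exp (-a ‖y‖²)` and `a = 1 / (2σ²)`. Then `P₀ = 1 / θ(a)` and the entropy is
`log θ(a)` plus the mean of the energy `t = a ‖y‖²`. Off the origin the energy is compared with the
level `π n`: the contribution above that level is controlled by `exp (-7πn/8) θ(a/8)`.

The growth of `θ` is bounded without Poisson summation. Since `f_{a/2}(u - v) f_{a/2}(u + v) =
f_a(u) f_a(v)` for `f_a(y) = exp (-a ‖y‖²)` by the parallelogram law, summing over all `u, v ∈ L`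
shows that the squares of the coset sums of `f_{a/2}` modulo `2L` add up to `θ(a)²`. There are `2ⁿ`
cosets, so Cauchy-Schwarz gives `θ(a/2)² ≤ 2ⁿ θ(a)²`, hence `θ(a/8)² ≤ 8ⁿ θ(a)²`, and
`exp (-7πn/8) 8^{n/2} ≤ exp (-1.7n)`.
-/

open Module (finrank)

section CosetSums

variable {M : Type*} [AddCommGroup M]

lemma sq_tsum_le_index_mul_tsum_mul_tsum_add (H : AddSubgroup M) [H.FiniteIndex] (f : M → ℝ≥0∞) :
    (∑' x, f x) ^ 2 ≤ H.index * ∑' x, f x * ∑' k : H, f (x + k) := by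
  have : Fintype (M ⧸ H) := Fintype.ofFinite _
  let cosetSum (q : M ⧸ H) : ℝ≥0∞ := ∑' x : (QuotientAddGroup.mk ⁻¹' {q} : Set M), f x
  have cosetSum_le (x : M) : cosetSum x ≤ ∑' k : H, f (x + k) := by
    refine ENNReal.tsum_le_tsum_comp_of_surjective
      (f := fun k : H ↦ (⟨x + k, by simp⟩ : (QuotientAddGroup.mk ⁻¹' {(x : M ⧸ H)} : Set M)))
      (fun ⟨y, hy⟩ ↦ ?_) (fun y ↦ f y)
    exact ⟨⟨-x + y, QuotientAddGroup.eq.1 (Set.mem_singleton_iff.1 hy).symm⟩, by simp⟩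
  calc (∑' x, f x) ^ 2
      = (∑ q, cosetSum q) ^ 2 := by
        rw [← ENNReal.tsum_fiberwise f (QuotientAddGroup.mk : M → M ⧸ H), tsum_fintype]
    _ ≤ H.index * ∑ q, cosetSum q ^ 2 := by
        simpa [AddSubgroup.index_eq_card, show (2 : ℝ) - 1 = 1 by norm_num] using
          ENNReal.rpow_sum_le_const_mul_sum_rpow Finset.univ cosetSum one_le_two
    _ = H.index * ∑' x, f x * cosetSum x := by
        rw [← ENNReal.tsum_fiberwise _ (QuotientAddGroup.mk : M → M ⧸ H), tsum_fintype]
        congr! 2 with q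
        rw [sq, ← ENNReal.tsum_mul_right]
        exact tsum_congr fun ⟨x, hx⟩ ↦ by rw [Set.mem_singleton_iff.1 hx]
    _ ≤ H.index * ∑' x, f x * ∑' k : H, f (x + k) := by
        gcongr with x
        exact cosetSum_le x

-- The substitution `x = u - v`, `k = 2 • v` turns the pairs of congruent elements modulo `2 • M`
-- into all pairs `(u, v)`.
lemma tsum_mul_tsum_add_range_two_nsmul_le {f g : M → ℝ≥0∞}
    (hfg : ∀ u v, f (u - v) * f (u + v) ≤ g u * g v) :
    ∑' x, f x * ∑' k : (nsmulAddMonoidHom (α := M) 2).range, f (x + k) ≤ (∑' x, g x) ^ 2 :=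
  calc ∑' x, f x * ∑' k : (nsmulAddMonoidHom (α := M) 2).range, f (x + k)
      ≤ ∑' x, f x * ∑' v, f (x + 2 • v) := by
        gcongr with x
        exact ENNReal.tsum_le_tsum_comp_of_surjective
          (nsmulAddMonoidHom (α := M) 2).rangeRestrict_surjective (fun k ↦ f (x + k))
    _ = ∑' v, ∑' x, f x * f (x + 2 • v) := by
        simp only [← ENNReal.tsum_mul_left]
        exact ENNReal.tsum_comm
    _ = ∑' v, ∑' u, f (u - v) * f (u + v) := by
        refine tsum_congr fun v ↦ ?_
        rw [← (Equiv.subRight v).tsum_eq]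
        refine tsum_congr fun u ↦ ?_
        rw [Equiv.subRight_apply, two_nsmul, ← add_assoc, sub_add_cancel]
    _ ≤ ∑' v, ∑' u, g u * g v := by
        gcongr ∑' v, ∑' u, ?_ with v u
        exact hfg u v
    _ = (∑' x, g x) ^ 2 := by
        simp only [ENNReal.tsum_mul_left, ENNReal.tsum_mul_right, sq]

lemma sq_tsum_le_two_pow_finrank_mul_sq_tsum [Module.Free ℤ M] [Module.Finite ℤ M]
    {f g : M → ℝ≥0∞} (hfg : ∀ u v, f (u - v) * f (u + v) ≤ g u * g v) :
    (∑' x, f x) ^ 2 ≤ 2 ^ finrank ℤ M * (∑' x, g x) ^ 2 := by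
  have index_eq := AddSubgroup.index_range_nsmul M 2
  have : (nsmulAddMonoidHom (α := M) 2).range.FiniteIndex := ⟨by simp [index_eq]⟩
  calc (∑' x, f x) ^ 2
      ≤ (nsmulAddMonoidHom (α := M) 2).range.index * (∑' x, g x) ^ 2 :=
        (sq_tsum_le_index_mul_tsum_mul_tsum_add _ f).trans
          (mul_le_mul_right (tsum_mul_tsum_add_range_two_nsmul_le hfg) _)
    _ = 2 ^ finrank ℤ M * (∑' x, g x) ^ 2 := by simp [index_eq]

end CosetSums

-- Multiply `(1 - s) * (t - c) ≤ exp ((1 - s) * (t - c))` by `exp (-t)`.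
lemma mul_exp_neg_le {s : ℝ} (hs : s < 1) (c t : ℝ) :
    t * exp (-t) ≤ c * exp (-t) + (1 - s)⁻¹ * exp (-((1 - s) * c)) * exp (-(s * t)) := by
  have hs : 0 < 1 - s := sub_pos.2 hs
  have exp_mul : exp (-((1 - s) * c)) * exp (-(s * t)) = exp ((1 - s) * (t - c)) * exp (-t) := by
    rw [← exp_add, ← exp_add]
    congr 1
    ring
  have sub_le : t - c ≤ (1 - s)⁻¹ * exp ((1 - s) * (t - c)) := by
    rw [le_inv_mul_iff₀ hs]
    linarith [add_one_le_exp ((1 - s) * (t - c))]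
  rw [mul_assoc, exp_mul, ← mul_assoc, ← add_mul]
  gcongr
  linarith

section ThetaSeries

variable {E : Type*} [NormedAddCommGroup E]

/-- The theta series `∑_{y ∈ L} exp (-a ‖y‖²)` of a lattice `L`. Up to normalization it is the
Gaussian mass of `L` with parameter `σ`, where `a = 1 / (2σ²)`. -/
def thetaSeries (L : Submodule ℤ E) (a : ℝ) : ℝ :=
  ∑' y : L, exp (-(a * ‖(y : E)‖ ^ 2))

lemma thetaSeries_nonneg (L : Submodule ℤ E) (a : ℝ) : 0 ≤ thetaSeries L a :=
  tsum_nonneg fun _ ↦ (exp_pos _).le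

variable [NormedSpace ℝ E] [FiniteDimensional ℝ E] (L : Submodule ℤ E) [DiscreteTopology L] {a : ℝ}

lemma summable_exp_neg_mul_norm_sq (ha : 0 < a) :
    Summable fun y : L ↦ exp (-(a * ‖(y : E)‖ ^ 2)) := by
  set k := finrank ℤ L + 1
  have hsum := (ZLattice.summable_norm_pow_inv L (2 * k) (by lia)).mul_left (k.factorial / a ^ k)
  refine hsum.of_norm_bounded_eventually ?_
  filter_upwards [(Set.finite_singleton (0 : L)).compl_mem_cofinite] with y hy
  have hy : 0 < ‖y‖ := norm_pos_iff.2 hy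
  rw [norm_of_nonneg (exp_pos _).le, exp_neg]
  calc (exp (a * ‖(y : E)‖ ^ 2))⁻¹
      ≤ ((a * ‖(y : E)‖ ^ 2) ^ k / k.factorial)⁻¹ := by
        gcongr
        exact pow_div_factorial_le_exp _ (by positivity) k
    _ = k.factorial / a ^ k * ‖y‖⁻¹ ^ (2 * k) := by
        rw [inv_div, mul_pow, ← pow_mul, div_mul_eq_div_div, inv_pow, ← div_eq_mul_inv,
          Submodule.coe_norm]

lemma one_le_thetaSeries (ha : 0 < a) : 1 ≤ thetaSeries L a := by
  simpa [thetaSeries] using (summable_exp_neg_mul_norm_sq L ha).le_tsum 0 fun _ _ ↦ (exp_pos _).le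

lemma ofReal_thetaSeries (ha : 0 < a) :
    ENNReal.ofReal (thetaSeries L a) = ∑' y : L, ENNReal.ofReal (exp (-(a * ‖(y : E)‖ ^ 2))) :=
  ENNReal.ofReal_tsum_of_nonneg (fun _ ↦ (exp_pos _).le) (summable_exp_neg_mul_norm_sq L ha)

lemma summable_energy (ha : 0 < a) :
    Summable fun y : L ↦ a * ‖(y : E)‖ ^ 2 * exp (-(a * ‖(y : E)‖ ^ 2)) := by
  refine .of_nonneg_of_le (fun _ ↦ by positivity) (fun y ↦ ?_)
    ((summable_exp_neg_mul_norm_sq L (mul_pos one_half_pos ha)).mul_left (1 - 1 / 2)⁻¹)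
  simpa [mul_assoc (2⁻¹ : ℝ)] using mul_exp_neg_le one_half_lt_one 0 (a * ‖(y : E)‖ ^ 2)

-- The energy vanishes at `y = 0`, so the term `c` of `mul_exp_neg_le` can be dropped there: this is
-- what produces `θ - 1` instead of `θ`.
lemma tsum_energy_le (ha : 0 < a) (c : ℝ) {s : ℝ} (hs₀ : 0 < s) (hs₁ : s < 1) :
    ∑' y : L, a * ‖(y : E)‖ ^ 2 * exp (-(a * ‖(y : E)‖ ^ 2)) ≤
      c * (thetaSeries L a - 1) +
        (1 - s)⁻¹ * exp (-((1 - s) * c)) * thetaSeries L (s * a) := by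
  classical
  have bound_hasSum :=
    (((summable_exp_neg_mul_norm_sq L ha).hasSum.sub (hasSum_ite_eq 0 1)).mul_left c).add
      ((summable_exp_neg_mul_norm_sq L (mul_pos hs₀ ha)).hasSum.mul_left
        ((1 - s)⁻¹ * exp (-((1 - s) * c))))
  refine hasSum_le (fun y ↦ ?_) (summable_energy L ha).hasSum bound_hasSum
  rcases eq_or_ne y 0 with rfl | hy
  · have : 0 ≤ (1 - s)⁻¹ * exp (-((1 - s) * c)) :=
      mul_nonneg (inv_nonneg.2 (sub_nonneg.2 hs₁.le)) (exp_pos _).le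
    simpa using this
  · simpa [hy, mul_assoc s] using mul_exp_neg_le hs₁ c (a * ‖(y : E)‖ ^ 2)

end ThetaSeries

section Scaling

variable {E : Type*} [NormedAddCommGroup E] [InnerProductSpace ℝ E]

lemma exp_norm_sub_mul_exp_norm_add (a : ℝ) (x y : E) :
    exp (-(a / 2 * ‖x - y‖ ^ 2)) * exp (-(a / 2 * ‖x + y‖ ^ 2)) =
      exp (-(a * ‖x‖ ^ 2)) * exp (-(a * ‖y‖ ^ 2)) := by
  rw [← exp_add, ← exp_add]
  congr 1
  linear_combination -(a / 2) * parallelogram_law_with_norm ℝ x y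

variable [FiniteDimensional ℝ E] (L : Submodule ℤ E) [DiscreteTopology L] {a : ℝ}

lemma sq_thetaSeries_half_le (ha : 0 < a) :
    thetaSeries L (a / 2) ^ 2 ≤ 2 ^ finrank ℤ L * thetaSeries L a ^ 2 := by
  have hθ := thetaSeries_nonneg L
  rw [← ENNReal.ofReal_le_ofReal_iff (by positivity), ENNReal.ofReal_mul (by positivity),
    ENNReal.ofReal_pow (hθ _), ENNReal.ofReal_pow (hθ _), ENNReal.ofReal_pow zero_le_two,
    ENNReal.ofReal_ofNat, ofReal_thetaSeries L ha, ofReal_thetaSeries L (half_pos ha)]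
  refine sq_tsum_le_two_pow_finrank_mul_sq_tsum fun u v ↦ ?_
  rw [← ENNReal.ofReal_mul (exp_pos _).le, ← ENNReal.ofReal_mul (exp_pos _).le]
  exact (congrArg ENNReal.ofReal (exp_norm_sub_mul_exp_norm_add a (u : E) v)).le

lemma sq_thetaSeries_div_two_pow_le (ha : 0 < a) (k : ℕ) :
    thetaSeries L (a / 2 ^ k) ^ 2 ≤ (2 ^ k) ^ finrank ℤ L * thetaSeries L a ^ 2 := by
  induction k with
  | zero => simp
  | succ k ih =>
    calc thetaSeries L (a / 2 ^ (k + 1)) ^ 2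
        ≤ 2 ^ finrank ℤ L * thetaSeries L (a / 2 ^ k) ^ 2 := by
          rw [pow_succ 2, ← div_div]
          exact sq_thetaSeries_half_le L (by positivity)
      _ ≤ 2 ^ finrank ℤ L * ((2 ^ k) ^ finrank ℤ L * thetaSeries L a ^ 2) := by gcongr
      _ = (2 ^ (k + 1)) ^ finrank ℤ L * thetaSeries L a ^ 2 := by
          rw [pow_succ 2, mul_pow]
          ring

lemma eight_pow_mul_sq_exp_le (d : ℕ) :
    8 ^ d * exp (-(7 / 8 * (π * d))) ^ 2 ≤ exp (-1.7 * d) ^ 2 := by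
  have exponent_le : 3 * log 2 - 7 / 4 * π ≤ -3.4 := by
    linarith [log_two_lt_d9, pi_gt_d4]
  have eight_pow_eq : (8 : ℝ) ^ d = exp (d * (3 * log 2)) := by
    rw [exp_nat_mul, show (3 : ℝ) * log 2 = log (2 ^ 3) by simp, exp_log (by norm_num)]
    norm_num
  calc 8 ^ d * exp (-(7 / 8 * (π * d))) ^ 2
      = exp (d * (3 * log 2 - 7 / 4 * π)) := by
        rw [eight_pow_eq, ← exp_nat_mul, ← exp_add]
        congr 1
        push_cast
        ring
    _ ≤ exp (d * -3.4) := by gcongr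
    _ = exp (-1.7 * d) ^ 2 := by
        rw [← exp_nat_mul]
        congr 1
        push_cast
        ring

lemma exp_neg_mul_thetaSeries_div_eight_le (ha : 0 < a) {d : ℕ} (hd : finrank ℤ L ≤ d) :
    exp (-(7 / 8 * (π * d))) * thetaSeries L (a / 8) ≤ exp (-1.7 * d) * thetaSeries L a := by
  have hθ := thetaSeries_nonneg L a
  have sq_theta_le : thetaSeries L (a / 8) ^ 2 ≤ 8 ^ d * thetaSeries L a ^ 2 :=
    calc thetaSeries L (a / 8) ^ 2
        ≤ 8 ^ finrank ℤ L * thetaSeries L a ^ 2 := by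
          simpa [show (2 : ℝ) ^ 3 = 8 by norm_num] using sq_thetaSeries_div_two_pow_le L ha 3
      _ ≤ 8 ^ d * thetaSeries L a ^ 2 := by
          gcongr
          norm_num
  refine le_of_sq_le_sq ?_ (by positivity)
  calc (exp (-(7 / 8 * (π * d))) * thetaSeries L (a / 8)) ^ 2
      ≤ exp (-(7 / 8 * (π * d))) ^ 2 * (8 ^ d * thetaSeries L a ^ 2) := by
        rw [mul_pow]
        gcongr
    _ = 8 ^ d * exp (-(7 / 8 * (π * d))) ^ 2 * thetaSeries L a ^ 2 := by ring
    _ ≤ exp (-1.7 * d) ^ 2 * thetaSeries L a ^ 2 := by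
        gcongr
        exact eight_pow_mul_sq_exp_le d
    _ = (exp (-1.7 * d) * thetaSeries L a) ^ 2 := (mul_pow _ _ 2).symm

lemma tsum_energy_le_of_finrank_le (ha : 0 < a) {d : ℕ} (hd : finrank ℤ L ≤ d) :
    ∑' y : L, a * ‖(y : E)‖ ^ 2 * exp (-(a * ‖(y : E)‖ ^ 2)) ≤
      π * d * (thetaSeries L a - 1) + 1.8 * exp (-1.7 * d) * thetaSeries L a :=
  calc ∑' y : L, a * ‖(y : E)‖ ^ 2 * exp (-(a * ‖(y : E)‖ ^ 2))
      ≤ π * d * (thetaSeries L a - 1) +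
          8 / 7 * (exp (-(7 / 8 * (π * d))) * thetaSeries L (a / 8)) := by
        convert tsum_energy_le L ha (π * d) (s := 1 / 8) (by norm_num) (by norm_num) using 2
        norm_num [mul_assoc, div_eq_inv_mul]
    _ ≤ π * d * (thetaSeries L a - 1) + 1.8 * (exp (-1.7 * d) * thetaSeries L a) := by
        refine add_le_add_right (mul_le_mul (by norm_num)
          (exp_neg_mul_thetaSeries_div_eight_le L ha hd) ?_ (by norm_num)) _
        exact mul_nonneg (exp_pos _).le (thetaSeries_nonneg L _)
    _ = _ := by rw [mul_assoc 1.8]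

end Scaling

section Entropy

lemma entropy_gibbs {ι : Type*} [Nonempty ι] {t : ι → ℝ} (ht : Summable fun i ↦ exp (-t i))
    (hE : Summable fun i ↦ t i * exp (-t i)) {Z : ℝ} (hZ : Z = ∑' i, exp (-t i)) :
    -∑' i, exp (-t i) / Z * log (exp (-t i) / Z) = (∑' i, t i * exp (-t i)) / Z + log Z := by
  have Z_pos : 0 < Z :=
    hZ ▸ ht.tsum_pos (fun _ ↦ (exp_pos _).le) (Classical.arbitrary ι) (exp_pos _)
  have term_eq (i : ι) : -(exp (-t i) / Z * log (exp (-t i) / Z)) =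
      t i * exp (-t i) / Z + log Z / Z * exp (-t i) := by
    rw [log_div (exp_pos _).ne' Z_pos.ne', log_exp]
    ring
  rw [← tsum_neg, tsum_congr term_eq, (hE.div_const Z).tsum_add (ht.mul_left _), tsum_div_const,
    tsum_mul_left, ← hZ, div_mul_cancel₀ _ Z_pos.ne']

variable {n : ℕ} (L : Submodule ℤ (EuclideanSpace ℝ (Fin n))) (σ : ℝ)

lemma gaussF_eq_mul_exp (x : EuclideanSpace ℝ (Fin n)) :
    gaussF n σ x =
      (2 * π * σ ^ 2) ^ (-(n : ℝ) / 2) * exp (-((2 * σ ^ 2)⁻¹ * ‖x‖ ^ 2)) := by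
  rw [gaussF, neg_div (2 * σ ^ 2), div_eq_inv_mul (‖x‖ ^ 2)]

lemma gaussMass_eq_mul_thetaSeries :
    gaussMass n σ L = (2 * π * σ ^ 2) ^ (-(n : ℝ) / 2) * thetaSeries L (2 * σ ^ 2)⁻¹ := by
  rw [thetaSeries, ← tsum_mul_left]
  simp only [gaussMass, gaussF_eq_mul_exp]
  rfl

variable {σ}

lemma gaussF_div_gaussMass_s13 (hσ : 0 < σ) (x : EuclideanSpace ℝ (Fin n)) :
    gaussF n σ x / gaussMass n σ L =
      exp (-((2 * σ ^ 2)⁻¹ * ‖x‖ ^ 2)) / thetaSeries L (2 * σ ^ 2)⁻¹ := by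
  rw [gaussF_eq_mul_exp, gaussMass_eq_mul_thetaSeries, mul_div_mul_left _ _ (by positivity)]

lemma rpow_mul_gaussMass (hσ : 0 < σ) :
    (2 * π * σ ^ 2) ^ ((n : ℝ) / 2) * gaussMass n σ L = thetaSeries L (2 * σ ^ 2)⁻¹ := by
  rw [gaussMass_eq_mul_thetaSeries, ← mul_assoc, ← rpow_add (by positivity), neg_div,
    add_neg_cancel, rpow_zero, one_mul]

lemma dgEntropy_eq [DiscreteTopology L] (hσ : 0 < σ) :
    dgEntropy n σ L =
      (∑' y : L, (2 * σ ^ 2)⁻¹ * ‖(y : EuclideanSpace ℝ (Fin n))‖ ^ 2 *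
          exp (-((2 * σ ^ 2)⁻¹ * ‖(y : EuclideanSpace ℝ (Fin n))‖ ^ 2))) /
        thetaSeries L (2 * σ ^ 2)⁻¹ + log (thetaSeries L (2 * σ ^ 2)⁻¹) := by
  have ha : 0 < (2 * σ ^ 2)⁻¹ := by positivity
  rw [dgEntropy]
  simp only [gaussF_div_gaussMass_s13 L hσ]
  exact entropy_gibbs (summable_exp_neg_mul_norm_sq L ha) (summable_energy L ha) rfl

lemma dgEntropy_le [DiscreteTopology L] (hσ : 0 < σ) {d : ℕ} (hd : finrank ℤ L ≤ d) :
    dgEntropy n σ L ≤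
      π * d * (1 - (thetaSeries L (2 * σ ^ 2)⁻¹)⁻¹) + 1.8 * exp (-1.7 * d) +
        log (thetaSeries L (2 * σ ^ 2)⁻¹) := by
  have ha : 0 < (2 * σ ^ 2)⁻¹ := by positivity
  have energy_le := tsum_energy_le_of_finrank_le L ha hd
  have θ_pos := one_pos.trans_le (one_le_thetaSeries L ha)
  rw [dgEntropy_eq L hσ]
  gcongr
  rwa [div_le_iff₀ θ_pos, add_mul, mul_assoc (π * d), sub_mul, one_mul,
    inv_mul_cancel₀ θ_pos.ne']

end Entropy

theorem entropy_vs_mass_of_zero_general (n d : ℕ) (L : Submodule ℤ (EuclideanSpace ℝ (Fin n)))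
    [DiscreteTopology L] (hd : finrank ℤ L ≤ d) (σs : ℝ) (hσs : 0 < σs) (P0 : ℝ)
    (hP0 : P0 = ((2 * π * σs ^ 2) ^ ((n : ℝ) / 2) *
      gaussMass n σs (L : Set (EuclideanSpace ℝ (Fin n))))⁻¹) :
    (1 / (d : ℝ)) * dgEntropy n σs (L : Set (EuclideanSpace ℝ (Fin n))) ≤
      -(1 / (d : ℝ)) * log P0 + π * (1 - P0) + 1.8 * exp (-1.7 * d) / d := by
  rw [rpow_mul_gaussMass L hσs] at hP0
  have P0_le_one : P0 ≤ 1 := by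
    rw [hP0]
    exact inv_le_one_of_one_le₀ (one_le_thetaSeries L (by positivity))
  have entropy_le : dgEntropy n σs L ≤ π * d * (1 - P0) + 1.8 * exp (-1.7 * d) + -log P0 := by
    rw [hP0, log_inv, neg_neg]
    exact dgEntropy_le L hσs hd
  calc 1 / (d : ℝ) * dgEntropy n σs L
      ≤ 1 / (d : ℝ) * (π * d * (1 - P0) + 1.8 * exp (-1.7 * d) + -log P0) := by gcongr
    _ = -(1 / (d : ℝ)) * log P0 + (d : ℝ)⁻¹ * d * (π * (1 - P0)) +
          1.8 * exp (-1.7 * d) / d := by ring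
    _ ≤ -(1 / (d : ℝ)) * log P0 + 1 * (π * (1 - P0)) + 1.8 * exp (-1.7 * d) / d := by
        have : 0 ≤ π * (1 - P0) := mul_nonneg pi_pos.le (sub_nonneg.2 P0_le_one)
        gcongr
        exact inv_mul_le_one
    _ = _ := by rw [one_mul]

/-- entropy bound in terms of the mass of zero:
`(1/n)H(X) ≤ −(1/n)log P₀(Λ) + π(1−P₀(Λ)) + 1.8·e^{−1.7n}/n`. -/
theorem entropy_vs_mass_of_zero (n : ℕ) (L : Submodule ℤ (EuclideanSpace ℝ (Fin n)))
    [DiscreteTopology L] [IsZLattice ℝ L]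
    (σs : ℝ) (hσs : 0 < σs)
    (P0 : ℝ)
    (hP0 : P0 = ((2 * π * σs ^ 2) ^ ((n : ℝ) / 2) * gaussMass n σs (L : Set (EuclideanSpace ℝ (Fin n))))⁻¹) :
    (1 / (n : ℝ)) * dgEntropy n σs (L : Set (EuclideanSpace ℝ (Fin n))) ≤
      -(1 / (n : ℝ)) * Real.log P0 + π * (1 - P0) +
        1.8 * Real.exp (-1.7 * n) / n :=
  entropy_vs_mass_of_zero_general n n L (by rw [ZLattice.rank ℝ L, finrank_euclideanSpace_fin])
    σs hσs P0 hP0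
end
end
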